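/- Under the LSCC property, the relaxed WED slope coincides with the relaxed slope: |∂_w^- φ|(ū) = |∂⁻φ|(ū) for every ū ∈ D(φ). In particular, if the local slope |∂φ| is σ-sequentially lower semicontinuous along d-bounded sequences with bounded energy, then |∂_w^- φ|(ū) = |∂φ|(ū) for all ū ∈ D(φ). -/

import Mathlib

/-!
The two relaxed slopes are compared through two facts about the unrelaxed ones.

*Upper bound* (`wedSlope_le_slope`): `|∂_w φ|(x) ≤ |∂φ|(x)` on the domain. If `c > |∂φ|(x)`, then
`φ ≥ φ(x) - c d(x,·) - K d(x,·)²` globally, near `x` by definition of the slope and far away by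
coercivity (`exists_lower_bound`). Inserting this in the WED functional, a Hardy inequality in
`L²(μ_ε)` and Young's inequality give `V_ε(x) ≥ φ(x) - ε c² / (2 (1 - 8Kε))` (`WEDfun_ge`), hence
`limsup G_ε(x) ≤ c`. Taking relaxations yields `|∂_w^- φ| ≤ |∂⁻φ|`.

*Approximation* (`exists_slope_le`): if `|∂_w φ|(x) < c`, then arbitrarily close to `x` there are
points `y` with `φ(y) ≤ φ(x)` and `|∂φ|(y) ≤ c`. Otherwise the slope exceeds `c` on a sublevel ball
around `x`; minimising `φ + c d(·,y)` on small balls shows that `φ` drops by `c η` at distance at most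
`η` (`exists_descent_step`), and iterating and letting `η → 0` produces a `1`-Lipschitz curve from `x`
with `φ(u(t)) ≤ φ(x) - c t` for small `t` (`exists_descent_curve`). Running this curve at speed `c`
gives a competitor with `V_ε(x) ≤ φ(x) - ε c² / 2 + O(ε²)`, so that `|∂_w φ|(x) ≥ c`
(`le_wedSlope_of_curve`), a contradiction. Replacing each term of a sequence that is admissible for
`|∂_w^- φ|` by such a nearby point, which by (MT2) does not change the `σ`-limit, yields
`|∂⁻φ| ≤ |∂_w^- φ|`.
-/

open MeasureTheory Filter Topology Set ENNReal

noncomputable section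

namespace WED

variable {X : Type*} [MetricSpace X]

/-- The exponential probability measure `μ_ε = ε⁻¹ e^{-t/ε} dt` on `(0,∞)`. -/
def expMeasure (ε : ℝ) : Measure ℝ :=
  (volume.restrict (Ioi (0:ℝ))).withDensity fun t => ENNReal.ofReal (ε⁻¹ * Real.exp (-t / ε))

/-- The positive part of an extended real, as an extended nonnegative real. -/
def epos (x : EReal) : ℝ≥0∞ := if x = ⊤ then ⊤ else ENNReal.ofReal x.toReal

/-- The absolute value of an extended real, as an extended nonnegative real. -/
def eabs (x : EReal) : ℝ≥0∞ := epos x ⊔ epos (-x)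

/-- The (extended-real valued) integral of an extended-real valued function, defined as the
difference between the integrals of the positive and of the negative part. -/
def eIntegral (μ : Measure ℝ) (f : ℝ → EReal) : EReal :=
  ((∫⁻ t, epos (f t) ∂μ : ℝ≥0∞) : EReal) - ((∫⁻ t, epos (-f t) ∂μ : ℝ≥0∞) : EReal)

/-- `m` is *the* metric derivative of the curve `u` on the set `I ⊆ ℝ`:  `m` is a nonnegative
locally integrable function, `d(u s, u t) ≤ ∫_s^t m` (so that `u` is absolutely continuous),
and `m t` is the limit of the difference quotients `d(u s, u t)/|s-t|` at a.e. `t ∈ I`. -/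
structure IsMetricDerivOn (u : ℝ → X) (m : ℝ → ℝ) (I : Set ℝ) : Prop where
  nonneg : ∀ t, 0 ≤ m t
  locInt : ∀ s ∈ I, ∀ t ∈ I, IntegrableOn m (Icc s t) volume
  dist_le : ∀ s ∈ I, ∀ t ∈ I, s ≤ t → dist (u s) (u t) ≤ ∫ r in Icc s t, m r
  limit : ∀ᵐ t ∂(volume.restrict I),
    Tendsto (fun s => dist (u s) (u t) / |s - t|) (𝓝[I \ {t}] t) (𝓝 (m t))

/-- `u ∈ AC²_loc(I; X)`, with metric derivative `m`. -/
def AC2LocOn (u : ℝ → X) (m : ℝ → ℝ) (I : Set ℝ) : Prop :=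
  IsMetricDerivOn u m I ∧ ∀ s ∈ I, ∀ t ∈ I, IntegrableOn (fun r => m r ^ 2) (Icc s t) volume

/-- `u ∈ AC²(I; X)`, with metric derivative `m`. -/
def AC2On (u : ℝ → X) (m : ℝ → ℝ) (I : Set ℝ) : Prop :=
  IsMetricDerivOn u m I ∧ IntegrableOn (fun r => m r ^ 2) I volume

/-- The integrand `(ε/2)|u'|²(t) + φ(u(t))` of the WED functional. -/
def wedIntegrand (φ : X → EReal) (ε : ℝ) (u : ℝ → X) (m : ℝ → ℝ) (t : ℝ) : EReal :=
  ((ε / 2 * m t ^ 2 : ℝ) : EReal) + φ (u t)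

/-- The WED functional `I_ε[u] = ∫₀^∞ ((ε/2)|u'|² + φ(u)) dμ_ε`. -/
def WEDfun (φ : X → EReal) (ε : ℝ) (u : ℝ → X) (m : ℝ → ℝ) : EReal :=
  eIntegral (expMeasure ε) (wedIntegrand φ ε u m)

/-- The admissible class `𝒜_x^ε`: curves `u ∈ AC²_loc([0,∞);X)` (with metric derivative `m`)
with `u 0 = x` and `∫₀^∞ |u'|² dμ_ε < ∞`. -/
def Admissible (ε : ℝ) (x : X) (u : ℝ → X) (m : ℝ → ℝ) : Prop :=
  u 0 = x ∧ AC2LocOn u m (Ici 0) ∧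
    (∫⁻ t, ENNReal.ofReal (m t ^ 2) ∂expMeasure ε) < ⊤

/-- The value function `V_ε(x) = inf { I_ε[u] : u ∈ 𝒜_x^ε }`. -/
def Veps (φ : X → EReal) (ε : ℝ) (x : X) : EReal :=
  ⨅ (p : {p : (ℝ → X) × (ℝ → ℝ) // Admissible ε x p.1 p.2}),
    WEDfun φ ε p.1.1 p.1.2

/-- `u` (with metric derivative `m`) minimizes the WED functional `I_ε` over `𝒜_x^ε`. -/
def IsMinimizer (φ : X → EReal) (ε : ℝ) (x : X) (u : ℝ → X) (m : ℝ → ℝ) : Prop :=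
  Admissible ε x u m ∧
    ∀ v n, Admissible ε x v n → WEDfun φ ε u m ≤ WEDfun φ ε v n

/-- The compatibility conditions (MT1), (MT2) between the distance `d` and the auxiliary
topology `σ`. -/
structure Compatible (σ : TopologicalSpace X) : Prop where
  mt1 : ∀ (u v : ℕ → X) (x y : X), Tendsto u atTop (@nhds X σ x) →
    Tendsto v atTop (@nhds X σ y) →
    ENNReal.ofReal (dist x y) ≤ Filter.liminf (fun n => ENNReal.ofReal (dist (u n) (v n))) atTop
  mt2 : ∀ U : Set X, IsOpen[σ] U → ∀ x ∈ U, ∃ V : Set X, IsOpen[σ] V ∧ x ∈ V ∧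
    ∃ δ : ℝ, 0 < δ ∧ ∀ y : X, Metric.infDist y V < δ → y ∈ U

/-- The standard lower semicontinuity–compactness–coercivity (LSCC) assumptions on a proper
functional `φ : X → (-∞,∞]`, with respect to the auxiliary topology `σ`. -/
structure LSCC (σ : TopologicalSpace X) (φ : X → EReal) (ustar : X) (A B : ℝ) : Prop where
  hA : 0 ≤ A
  hB : 0 ≤ B
  proper : ∃ x, φ x ≠ ⊤
  ne_bot : ∀ x, φ x ≠ ⊥
  lsc : ∀ (u : ℕ → X) (x : X), (∃ C : ℝ, ∀ n k, dist (u n) (u k) ≤ C) →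
    Tendsto u atTop (@nhds X σ x) → φ x ≤ Filter.liminf (fun n => φ (u n)) atTop
  cpt : ∀ u : ℕ → X, (∃ C : ℝ, ∀ n, φ (u n) ≤ (C : EReal)) →
    (∃ C : ℝ, ∀ n k, dist (u n) (u k) ≤ C) →
    ∃ (x : X) (j : ℕ → ℕ), StrictMono j ∧ Tendsto (u ∘ j) atTop (@nhds X σ x)
  coercive : ∀ u v : X, ((-(B * dist u v ^ 2 + (B * dist v ustar ^ 2 + A)) : ℝ) : EReal) ≤ φ u

/-- The local (descending) slope `|∂φ|(x) = limsup_{v→x} (φ(x)-φ(v))⁺/d(x,v)`. -/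
def slope (φ : X → EReal) (x : X) : ℝ≥0∞ :=
  Filter.limsup (fun v => epos (φ x - φ v) / ENNReal.ofReal (dist x v)) (𝓝[≠] x)

/-- The relaxed slope `|∂⁻φ|`: the σ-sequential lower semicontinuous envelope of the local
slope along `d`-bounded sequences with bounded energy. -/
def relaxedSlope (σ : TopologicalSpace X) (φ : X → EReal) (x : X) : ℝ≥0∞ :=
  ⨅ (u : ℕ → X) (_ : Tendsto u atTop (@nhds X σ x))
    (_ : ∃ C : ℝ, ∀ n, dist (u n) x ≤ C ∧ φ (u n) ≤ (C : EReal)),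
    Filter.liminf (fun n => slope φ (u n)) atTop

/-- `G_ε(x) = sqrt(2(φ(x) - V_ε(x))/ε)` if `V_ε(x) < ∞`, and `∞` otherwise. -/
def Geps (φ : X → EReal) (ε : ℝ) (x : X) : ℝ≥0∞ :=
  if Veps φ ε x = ⊤ then ⊤
  else (2 * epos (φ x - Veps φ ε x) / ENNReal.ofReal ε) ^ (1/2 : ℝ)

/-- The measure `|u'| dt` on `I` associated with the speed `m` of a curve. -/
def speedMeasure (m : ℝ → ℝ) (I : Set ℝ) : Measure ℝ :=
  (volume.restrict I).withDensity fun t => ENNReal.ofReal (m t)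

/-- Membership in `L^p(μ)`, `p ∈ [1,∞]`, for an `ℝ≥0∞`-valued function. -/
def MemLpENN (f : ℝ → ℝ≥0∞) (p : ℝ≥0∞) (μ : Measure ℝ) : Prop :=
  if p = ⊤ then ∃ C : ℝ≥0∞, C ≠ ⊤ ∧ ∀ᵐ t ∂μ, f t ≤ C
  else (∫⁻ t, f t ^ p.toReal ∂μ) < ⊤

/-- `g` is an `L^p`-moderated upper gradient for `φ`: for every absolutely continuous curve
`u` (with metric derivative `m`) on a compact interval such that `φ∘u ∈ L^p(|u'|dt)` and
`g∘u ∈ L¹(|u'|dt)`, one has `|φ(u t) - φ(u s)| ≤ ∫_s^t g(u r) |u'|(r) dr`. -/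
def IsModeratedUpperGradient (φ : X → EReal) (g : X → ℝ≥0∞) (p : ℝ≥0∞) : Prop :=
  ∀ (a b : ℝ), a ≤ b → ∀ (u : ℝ → X) (m : ℝ → ℝ), IsMetricDerivOn u m (Icc a b) →
    MemLpENN (fun t => eabs (φ (u t))) p (speedMeasure m (Icc a b)) →
    (∫⁻ t in Icc a b, g (u t) * ENNReal.ofReal (m t)) < ⊤ →
    ∀ s ∈ Icc a b, ∀ t ∈ Icc a b, s ≤ t →
      (φ (u t) ≤ φ (u s) + ((∫⁻ r in Icc s t, g (u r) * ENNReal.ofReal (m r) : ℝ≥0∞) : EReal) ∧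
       φ (u s) ≤ φ (u t) + ((∫⁻ r in Icc s t, g (u r) * ENNReal.ofReal (m r) : ℝ≥0∞) : EReal))

/-- A real function `f` is locally absolutely continuous on `[0,∞)` with density `g`. -/
def RealACLoc (f g : ℝ → ℝ) : Prop :=
  (∀ b : ℝ, 0 ≤ b → IntegrableOn g (Icc 0 b) volume) ∧
  ∀ t : ℝ, 0 ≤ t → f t = f 0 + ∫ r in Icc 0 t, g r

/-- A real function `f` belongs to `AC²_loc([0,∞);ℝ)`, with derivative `g`. -/
def RealAC2Loc (f g : ℝ → ℝ) : Prop :=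
  RealACLoc f g ∧ ∀ b : ℝ, 0 ≤ b → IntegrableOn (fun t => g t ^ 2) (Icc 0 b) volume

/-- The compact-open topology on curves `[0,∞) → X` induced by the auxiliary topology `σ`. -/
def compactOpenOf (σ : TopologicalSpace X) : TopologicalSpace (ℝ → X) :=
  TopologicalSpace.generateFrom
    {S | ∃ (K : Set ℝ) (U : Set X), K ⊆ Ici 0 ∧ IsCompact K ∧ IsOpen[σ] U ∧
      S = {f : ℝ → X | MapsTo f K U}}

/-- The WED slope `|∂_w φ|(x) = limsup_{ε↓0} G_ε(x)`. -/
def wedSlope (φ : X → EReal) (x : X) : ℝ≥0∞ :=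
  Filter.limsup (fun ε => Geps φ ε x) (𝓝[>] (0:ℝ))

/-- The relaxed WED slope `|∂_w^- φ|`. -/
def relaxedWedSlope (σ : TopologicalSpace X) (φ : X → EReal) (x : X) : ℝ≥0∞ :=
  ⨅ (u : ℕ → X) (_ : Tendsto u atTop (@nhds X σ x))
    (_ : ∃ C : ℝ, ∀ n, dist (u n) x ≤ C ∧ φ (u n) ≤ (C : EReal)),
    Filter.liminf (fun n => wedSlope φ (u n)) atTop

/-- The φ-conditioned local slope `|∂̃ψ|(x) = limsup_{v→x, φ(v)→φ(x)} (ψ(x)-ψ(v))⁺/d(x,v)`. -/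
def condSlope (φ ψ : X → EReal) (x : X) : ℝ≥0∞ :=
  Filter.limsup (fun v => epos (ψ x - ψ v) / ENNReal.ofReal (dist x v))
    ((𝓝[≠] x) ⊓ Filter.comap φ (𝓝 (φ x)))

/-- `φ` is geodesically `λ`-convex: every pair of points of `D(φ)` is joined by a
constant-speed geodesic along which `φ` is `λ`-convex. -/
def GeodesicLambdaConvex (φ : X → EReal) (lam : ℝ) : Prop :=
  ∀ v₀ v₁ : X, φ v₀ ≠ ⊤ → φ v₁ ≠ ⊤ → ∃ γ : ℝ → X, γ 0 = v₀ ∧ γ 1 = v₁ ∧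
    (∀ s ∈ Icc (0:ℝ) 1, ∀ t ∈ Icc (0:ℝ) 1, dist (γ s) (γ t) = |t - s| * dist v₀ v₁) ∧
    ∀ t ∈ Icc (0:ℝ) 1, φ (γ t) ≤ ((1 - t : ℝ) : EReal) * φ v₀ + ((t : ℝ) : EReal) * φ v₁ -
      ((lam / 2 * t * (1 - t) * dist v₀ v₁ ^ 2 : ℝ) : EReal)

end WED
namespace WED

/-! ### Metric derivative of a Lipschitz curve -/

/-- Every Lipschitz curve has a metric derivative: with `q` ranging over the rationals, it is the
supremum of the absolute derivatives of the real Lipschitz functions `t ↦ d(u t, u q)`. The lower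
bound on the difference quotients comes from differentiability of these functions, the upper bound
from Lebesgue differentiation of the integral of that supremum. -/
theorem exists_metricDeriv {X : Type*} [MetricSpace X] {u : ℝ → X} {K : NNReal}
    (hu : LipschitzWith K u) :
    ∃ m : ℝ → ℝ, (∀ t, 0 ≤ m t) ∧ (∀ t, m t ≤ K) ∧ Measurable m ∧
      (∀ s t, s ≤ t → dist (u s) (u t) ≤ ∫ r in Icc s t, m r) ∧
      ∀ᵐ t, Tendsto (fun s => dist (u s) (u t) / |s - t|) (𝓝[≠] t) (𝓝 (m t)) := by
  set f : ℚ → ℝ → ℝ := fun q t => dist (u t) (u q) with hf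
  have hfl : ∀ q, LipschitzWith K (f q) := by
    intro q
    have h := (LipschitzWith.dist_left (u q)).comp hu
    rw [one_mul] at h
    exact h
  have hfd : ∀ q t, |deriv (f q) t| ≤ K := fun q t => by
    simpa using norm_deriv_le_of_lipschitz (x₀ := t) (hfl q)
  set m : ℝ → ℝ := fun t => ⨆ q : ℚ, |deriv (f q) t| with hm
  have hbdd : ∀ t, BddAbove (range fun q : ℚ => |deriv (f q) t|) := fun t =>
    ⟨K, by rintro _ ⟨q, rfl⟩; exact hfd q t⟩
  have hm0 : ∀ t, 0 ≤ m t := fun t => Real.iSup_nonneg fun q => abs_nonneg _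
  have hmK : ∀ t, m t ≤ K := fun t => ciSup_le fun q => hfd q t
  have hmm : Measurable m := by
    refine Measurable.iSup fun q => ?_
    have := measurable_deriv (f q)
    fun_prop
  have hint : LocallyIntegrable m volume := by
    refine (locallyIntegrable_const (K : ℝ)).mono hmm.aestronglyMeasurable (ae_of_all _ fun t => ?_)
    rw [Real.norm_of_nonneg (hm0 t)]
    simpa using hmK t
  have hII : ∀ a b, IntervalIntegrable m volume a b := fun a b =>
    (hint.integrableOn_isCompact isCompact_uIcc).intervalIntegrable
  have hdf : ∀ q s t, s ≤ t → |f q t - f q s| ≤ ∫ r in s..t, m r := by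
    intro q s t hst
    have h := ((hfl q).lipschitzOnWith (s := uIcc s t)).absolutelyContinuousOnInterval.integral_deriv_eq_sub
    rw [← h, ← Real.norm_eq_abs]
    refine intervalIntegral.norm_integral_le_of_norm_le hst (ae_of_all _ fun r _ => ?_) (hII s t)
    exact le_ciSup (hbdd r) q
  have hdist : ∀ s t, s ≤ t → dist (u s) (u t) ≤ ∫ r in s..t, m r := by
    intro s t hst
    have hcont : Continuous fun x : ℝ => |dist (u t) (u x) - dist (u s) (u x)| := by
      have := hu.continuous
      fun_prop
    have hcl : IsClosed {x : ℝ | |dist (u t) (u x) - dist (u s) (u x)| ≤ ∫ r in s..t, m r} :=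
      isClosed_le hcont continuous_const
    have := hcl.closure_subset_iff.2 (show range ((↑) : ℚ → ℝ) ⊆ _ from by
      rintro _ ⟨q, rfl⟩; exact hdf q s t hst)
    have h2 := this (Rat.isDenseEmbedding_coe_real.dense s)
    simpa [dist_comm] using h2
  refine ⟨m, hm0, hmK, hmm, ?_, ?_⟩
  · intro s t hst
    rw [integral_Icc_eq_integral_Ioc, ← intervalIntegral.integral_of_le hst]
    exact hdist s t hst
  · have hdiff : ∀ᵐ t, ∀ q, DifferentiableAt ℝ (f q) t :=
      ae_all_iff.2 fun q => (hfl q).ae_differentiableAt_real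
    filter_upwards [hdiff, LocallyIntegrable.ae_hasDerivAt_integral hint] with t h1 h2
    have h2 := h2 0
    rw [hasDerivAt_iff_tendsto_slope] at h2
    have hup : Tendsto (fun s => |_root_.slope (fun x => ∫ y in (0:ℝ)..x, m y) t s|) (𝓝[≠] t) (𝓝 (m t)) := by
      have := h2.abs
      rwa [abs_of_nonneg (hm0 t)] at this
    rw [tendsto_order]
    constructor
    · intro a ha
      obtain ⟨q, hq⟩ := exists_lt_of_lt_ciSup ha
      have h3 := (hasDerivAt_iff_tendsto_slope.1 (h1 q).hasDerivAt).abs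
      filter_upwards [h3.eventually_const_lt hq] with s hs
      refine hs.trans_le ?_
      rw [slope_def_field, abs_div]
      gcongr
      exact abs_dist_sub_le _ _ _
    · intro b hb
      filter_upwards [hup.eventually_lt_const hb] with s hs
      refine lt_of_le_of_lt ?_ hs
      rw [slope_def_field, abs_div]
      gcongr
      rw [intervalIntegral.integral_interval_sub_left (hII _ _) (hII _ _)]
      rcases le_total s t with h | h
      · rw [intervalIntegral.integral_symm, abs_neg]
        exact (hdist s t h).trans (le_abs_self _)
      · rw [dist_comm]
        exact (hdist t s h).trans (le_abs_self _)

/-! ### The extended integral and the exponential measure -/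

theorem epos_eq (x : EReal) : epos x = x.toENNReal := rfl

theorem epos_mono {x y : EReal} (h : x ≤ y) : epos x ≤ epos y :=
  EReal.toENNReal_le_toENNReal h

theorem epos_coe (x : ℝ) : epos (x : EReal) = ENNReal.ofReal x := rfl

/-- No measurability is needed, because the lower integral is monotone. -/
theorem eIntegral_mono {μ : Measure ℝ} {f g : ℝ → EReal} (h : ∀ᵐ t ∂μ, f t ≤ g t) :
    eIntegral μ f ≤ eIntegral μ g := by
  refine EReal.sub_le_sub ?_ ?_
  · exact EReal.coe_ennreal_le_coe_ennreal_iff.2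
      (lintegral_mono_ae (h.mono fun t ht => epos_mono ht))
  · exact EReal.coe_ennreal_le_coe_ennreal_iff.2
      (lintegral_mono_ae (h.mono fun t ht => epos_mono (EReal.neg_le_neg_iff.2 ht)))

theorem eIntegral_coe {μ : Measure ℝ} {f : ℝ → ℝ} (hf : Integrable f μ) :
    eIntegral μ (fun t => (f t : EReal)) = ((∫ t, f t ∂μ : ℝ) : EReal) := by
  have h1 : ∫⁻ t, ENNReal.ofReal (f t) ∂μ ≠ ⊤ := hf.lintegral_lt_top.ne
  have h2 : ∫⁻ t, ENNReal.ofReal (-f t) ∂μ ≠ ⊤ := hf.neg.lintegral_lt_top.ne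
  rw [integral_eq_lintegral_pos_part_sub_lintegral_neg_part hf, EReal.coe_sub,
    EReal.coe_ennreal_toReal h1, EReal.coe_ennreal_toReal h2]
  rfl

theorem lintegral_expMeasure (ε : ℝ) (f : ℝ → ℝ≥0∞) :
    ∫⁻ t, f t ∂expMeasure ε
      = ∫⁻ t in Ioi (0:ℝ), ENNReal.ofReal (ε⁻¹ * Real.exp (-t / ε)) * f t := by
  unfold expMeasure
  rw [lintegral_withDensity_eq_lintegral_mul_non_measurable]
  · rfl
  · fun_prop
  · simp

theorem ae_expMeasure_pos (ε : ℝ) : ∀ᵐ t ∂expMeasure ε, 0 < t :=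
  (withDensity_absolutelyContinuous _ _).ae_le (ae_restrict_mem measurableSet_Ioi)

theorem expMeasure_ac (ε : ℝ) : expMeasure ε ≪ volume.restrict (Ioi (0:ℝ)) :=
  withDensity_absolutelyContinuous _ _

theorem lintegral_exp_Ioi {a : ℝ} (ha : 0 < a) (r : ℝ) :
    ∫⁻ t in Ioi r, ENNReal.ofReal (Real.exp (-t / a)) = ENNReal.ofReal (a * Real.exp (-r / a)) := by
  have hneg : -a⁻¹ < 0 := by simpa using ha
  have h1 : ∀ t : ℝ, -t / a = -a⁻¹ * t := fun t => by rw [div_eq_inv_mul]; ring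
  simp_rw [h1]
  rw [← ofReal_integral_eq_lintegral_ofReal (integrableOn_exp_mul_Ioi hneg r)
    (ae_of_all _ fun t => (Real.exp_pos _).le), integral_exp_mul_Ioi hneg]
  congr 1
  field_simp

/-- The `k`-th moment of `μ_ε` is `ε^k k!`. -/
theorem lintegral_pow_expMeasure {ε : ℝ} (hε : 0 < ε) (k : ℕ) :
    ∫⁻ t, ENNReal.ofReal (t ^ k) ∂expMeasure ε = ENNReal.ofReal (ε ^ k * k.factorial) := by
  have hi := Real.integral_rpow_mul_exp_neg_mul_Ioi (a := k + 1) (r := ε⁻¹) (by positivity)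
    (by positivity)
  have hG : Real.Gamma (k + 1) = k.factorial := Real.Gamma_nat_eq_factorial k
  have hne : (1 / ε⁻¹ : ℝ) ^ ((k : ℝ) + 1) * Real.Gamma (k + 1) ≠ 0 := by
    rw [hG]; positivity
  have hint : IntegrableOn (fun t : ℝ => t ^ ((k : ℝ) + 1 - 1) * Real.exp (-(ε⁻¹ * t))) (Ioi 0) := by
    by_contra h
    rw [integral_undef h] at hi
    exact hne hi.symm
  rw [lintegral_expMeasure]
  have hpt : ∀ t ∈ Ioi (0:ℝ), ENNReal.ofReal (ε⁻¹ * Real.exp (-t / ε)) * ENNReal.ofReal (t ^ k)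
      = ENNReal.ofReal (ε⁻¹ * (t ^ ((k : ℝ) + 1 - 1) * Real.exp (-(ε⁻¹ * t)))) := by
    intro t ht
    rw [← ENNReal.ofReal_mul (by positivity), add_sub_cancel_right, Real.rpow_natCast]
    congr 1
    rw [show -t / ε = -(ε⁻¹ * t) by rw [div_eq_inv_mul]; ring]
    ring
  rw [setLIntegral_congr_fun measurableSet_Ioi hpt, ← ofReal_integral_eq_lintegral_ofReal
    (hint.const_mul _), integral_const_mul, hi, hG]
  · congr 1
    rw [Real.rpow_add_one (by positivity), Real.rpow_natCast]
    field_simp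
  · filter_upwards [ae_restrict_mem measurableSet_Ioi] with t ht
    have : (0:ℝ) < t := ht
    positivity

theorem integrable_pow_expMeasure {ε : ℝ} (hε : 0 < ε) (k : ℕ) :
    Integrable (fun t : ℝ => t ^ k) (expMeasure ε) := by
  refine ⟨by fun_prop, ?_⟩
  rw [hasFiniteIntegral_iff_ofReal]
  · rw [lintegral_pow_expMeasure hε]; simp
  · filter_upwards [ae_expMeasure_pos ε] with t ht
    positivity

theorem integral_pow_expMeasure {ε : ℝ} (hε : 0 < ε) (k : ℕ) :
    ∫ t, t ^ k ∂expMeasure ε = ε ^ k * k.factorial := by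
  rw [integral_eq_lintegral_of_nonneg_ae, lintegral_pow_expMeasure hε, ENNReal.toReal_ofReal]
  · positivity
  · filter_upwards [ae_expMeasure_pos ε] with t ht
    positivity
  · fun_prop

theorem isProbabilityMeasure_expMeasure {ε : ℝ} (hε : 0 < ε) :
    IsProbabilityMeasure (expMeasure ε) := by
  refine ⟨?_⟩
  simpa using lintegral_pow_expMeasure hε 0

/-- Tonelli's theorem on the triangle `0 < r < t`. -/
theorem lintegral_triangle {g h : ℝ → ℝ≥0∞} (hg : AEMeasurable g (volume.restrict (Ioi 0)))
    (hh : Measurable h) :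
    ∫⁻ t in Ioi (0:ℝ), h t * ∫⁻ r in Ioo 0 t, g r
      = ∫⁻ r in Ioi (0:ℝ), g r * ∫⁻ t in Ioi r, h t := by
  set ν : Measure ℝ := volume.restrict (Ioi (0:ℝ)) with hν
  have e1 : ∀ t ∈ Ioi (0:ℝ), h t * ∫⁻ r in Ioo 0 t, g r
      = ∫⁻ r, {p : ℝ × ℝ | p.2 < p.1}.indicator (fun p => h p.1 * g p.2) (t, r) ∂ν := by
    intro t ht
    have : Ioo 0 t = Iio t ∩ Ioi 0 := by ext; simp [and_comm]
    rw [this, ← Measure.restrict_restrict measurableSet_Iio, ← hν, ← lintegral_const_mul'' _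
      (hg.mono_measure Measure.restrict_le_self), ← lintegral_indicator measurableSet_Iio]
    rfl
  have e2 : ∀ r ∈ Ioi (0:ℝ), g r * ∫⁻ t in Ioi r, h t
      = ∫⁻ t, {p : ℝ × ℝ | p.2 < p.1}.indicator (fun p => h p.1 * g p.2) (t, r) ∂ν := by
    intro r hr
    have : Ioi r = Ioi r ∩ Ioi 0 := by
      ext x; simp only [mem_inter_iff, mem_Ioi, iff_self_and]; exact fun hx => lt_trans hr hx
    rw [this, ← Measure.restrict_restrict measurableSet_Ioi, ← hν, ← lintegral_const_mul _ hh,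
      ← lintegral_indicator measurableSet_Ioi]
    refine lintegral_congr fun t => ?_
    simp only [indicator, mem_Ioi, mem_ofPred_eq, mul_comm]
  rw [setLIntegral_congr_fun measurableSet_Ioi e1, setLIntegral_congr_fun measurableSet_Ioi e2]
  refine lintegral_lintegral_swap (f := fun t r =>
    {p : ℝ × ℝ | p.2 < p.1}.indicator (fun p => h p.1 * g p.2) (t, r)) ?_
  refine AEMeasurable.indicator ?_ (measurableSet_lt measurable_snd measurable_fst)
  exact (hh.comp measurable_fst).aemeasurable.mul hg.comp_snd

/-- `∫ (∫₀ᵗ g) dμ_ε = ε ∫ g dμ_ε`. -/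
theorem lintegral_primitive {ε : ℝ} (hε : 0 < ε) {g : ℝ → ℝ≥0∞}
    (hg : AEMeasurable g (volume.restrict (Ioi 0))) :
    ∫⁻ t, (∫⁻ r in Ioo 0 t, g r) ∂expMeasure ε = ENNReal.ofReal ε * ∫⁻ t, g t ∂expMeasure ε := by
  rw [lintegral_expMeasure, lintegral_expMeasure, lintegral_triangle hg (by fun_prop),
    ← lintegral_const_mul' _ _ (by simp)]
  refine lintegral_congr fun r => ?_
  simp_rw [ENNReal.ofReal_mul (inv_pos.2 hε).le]
  rw [lintegral_const_mul' _ _ (by simp), lintegral_exp_Ioi hε, ENNReal.ofReal_mul hε.le,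
    ENNReal.ofReal_inv_of_pos hε]
  ring

/-- The Cauchy–Schwarz inequality with weight `e^{-r/(2ε)}`: the pointwise step behind the
Hardy-type inequality `lintegral_sq_primitive_le`. -/
theorem sq_primitive_le {ε : ℝ} (hε : 0 < ε) {g : ℝ → ℝ≥0∞} {t : ℝ}
    (hg : AEMeasurable g (volume.restrict (Ioo 0 t))) :
    (∫⁻ r in Ioo 0 t, g r) ^ 2 ≤ ENNReal.ofReal (2 * ε * Real.exp (t / (2 * ε))) *
      ∫⁻ r in Ioo 0 t, ENNReal.ofReal (Real.exp (-r / (2 * ε))) * g r ^ 2 := by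
  set μ := (volume.restrict (Ioo 0 t)) with hμ
  have hcs := ENNReal.lintegral_mul_le_Lp_mul_Lq μ Real.HolderConjugate.two_two
    (f := fun r => ENNReal.ofReal (Real.exp (r / (4 * ε))))
    (g := fun r => ENNReal.ofReal (Real.exp (-r / (4 * ε))) * g r)
    (by fun_prop) (by fun_prop)
  have e0 : ∀ r : ℝ, ((fun r => ENNReal.ofReal (Real.exp (r / (4 * ε)))) *
      (fun r => ENNReal.ofReal (Real.exp (-r / (4 * ε))) * g r)) r = g r := by
    intro r
    simp only [Pi.mul_apply]
    rw [← mul_assoc, ← ENNReal.ofReal_mul (Real.exp_pos _).le, ← Real.exp_add]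
    ring_nf
    simp
  have e1 : ∀ r : ℝ, ENNReal.ofReal (Real.exp (r / (4 * ε))) ^ (2:ℝ)
      = ENNReal.ofReal (Real.exp (r / (2 * ε))) := by
    intro r
    rw [ENNReal.rpow_two, ← ENNReal.ofReal_pow (Real.exp_pos _).le, ← Real.exp_nat_mul]
    congr 2; push_cast; field_simp; ring
  have e2 : ∀ r : ℝ, (ENNReal.ofReal (Real.exp (-r / (4 * ε))) * g r) ^ (2:ℝ)
      = ENNReal.ofReal (Real.exp (-r / (2 * ε))) * g r ^ 2 := by
    intro r
    rw [ENNReal.mul_rpow_of_nonneg _ _ (by norm_num), e1, ENNReal.rpow_two]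
  simp_rw [e0, e1, e2] at hcs
  have hsq : ∀ x : ℝ≥0∞, (x ^ (1 / 2 : ℝ)) ^ 2 = x := by
    intro x
    rw [← ENNReal.rpow_two, ← ENNReal.rpow_mul]; norm_num
  have h1 : ∫⁻ r, ENNReal.ofReal (Real.exp (r / (2 * ε))) ∂μ
      ≤ ENNReal.ofReal (2 * ε * Real.exp (t / (2 * ε))) := by
    have hsub := lintegral_exp_Ioi (a := 2 * ε) (by positivity) (-t)
    rw [neg_neg] at hsub
    rw [← hsub]
    have hmp := (Measure.measurePreserving_neg (volume : Measure ℝ)).setLIntegral_comp_preimage_emb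
      (MeasurableEquiv.neg ℝ).measurableEmbedding
      (fun r => ENNReal.ofReal (Real.exp (-r / (2 * ε)))) (Ioi (-t))
    rw [← hmp]
    simp only [neg_neg]
    refine lintegral_mono_set ?_
    intro x hx
    simpa using hx.2
  calc (∫⁻ r, g r ∂μ) ^ 2 ≤ ((∫⁻ r, ENNReal.ofReal (Real.exp (r / (2 * ε))) ∂μ) ^ (1 / 2 : ℝ) *
        (∫⁻ r, ENNReal.ofReal (Real.exp (-r / (2 * ε))) * g r ^ 2 ∂μ) ^ (1 / 2 : ℝ)) ^ 2 := by
        gcongr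
    _ = _ := by rw [mul_pow, hsq, hsq]
    _ ≤ _ := by gcongr

/-- Hardy-type inequality: `‖∫₀ᵗ g‖ ≤ 2ε ‖g‖` in `L²(μ_ε)`. -/
theorem lintegral_sq_primitive_le {ε : ℝ} (hε : 0 < ε) {g : ℝ → ℝ≥0∞}
    (hg : AEMeasurable g (volume.restrict (Ioi 0))) :
    ∫⁻ t, (∫⁻ r in Ioo 0 t, g r) ^ 2 ∂expMeasure ε
      ≤ ENNReal.ofReal (4 * ε ^ 2) * ∫⁻ t, g t ^ 2 ∂expMeasure ε := by
  have hsub : ∀ t : ℝ, AEMeasurable g (volume.restrict (Ioo 0 t)) := fun t =>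
    hg.mono_measure (Measure.restrict_mono_set _ Ioo_subset_Ioi_self)
  rw [lintegral_expMeasure, lintegral_expMeasure]
  calc _ ≤ ∫⁻ t in Ioi (0:ℝ), ENNReal.ofReal (2 * Real.exp (-t / (2 * ε))) *
        ∫⁻ r in Ioo 0 t, ENNReal.ofReal (Real.exp (-r / (2 * ε))) * g r ^ 2 := by
        refine lintegral_mono fun t => ?_
        refine (mul_le_mul_right (sq_primitive_le hε (hsub t)) _).trans_eq ?_
        rw [← mul_assoc, ← ENNReal.ofReal_mul (by positivity)]
        congr 2
        rw [show -t / (2 * ε) = -t / ε + t / (2 * ε) by field_simp; norm_num, Real.exp_add]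
        field_simp
    _ = _ := by
        rw [lintegral_triangle (by fun_prop) (by fun_prop), ← lintegral_const_mul' _ _ ENNReal.ofReal_ne_top]
        refine lintegral_congr fun r => ?_
        simp_rw [ENNReal.ofReal_mul (show (0:ℝ) ≤ 2 by norm_num)]
        rw [lintegral_const_mul' _ _ (by simp), lintegral_exp_Ioi (by positivity),
          ← ENNReal.ofReal_mul (by norm_num), mul_right_comm, ← ENNReal.ofReal_mul (by positivity),
          ← mul_assoc (ENNReal.ofReal (4 * ε ^ 2)), ← ENNReal.ofReal_mul (by positivity)]
        congr 2
        rw [show -r / ε = -r / (2 * ε) + -r / (2 * ε) by field_simp; norm_num, Real.exp_add]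
        field_simp
        norm_num

/-! ### The WED slope is bounded by the local slope -/

theorem ofReal_sq_rpow_half {c : ℝ} (hc : 0 ≤ c) :
    ENNReal.ofReal (c ^ 2) ^ (1 / 2 : ℝ) = ENNReal.ofReal c := by
  rw [ENNReal.ofReal_pow hc, ← ENNReal.rpow_natCast, ← ENNReal.rpow_mul]; norm_num

/-- If `φ ≥ a - c d(x,·) - K d(x,·)²`, then every curve starting at `x` has WED energy at least
`a - ε c² / (2 (1 - 8Kε))`. Along the curve `d(x, u t) ≤ ∫₀ᵗ |u'|`; the quadratic term costs at most
`4Kε² ‖u'‖²` by the Hardy inequality, and Young's inequality with parameter `lam = 1 - 8Kε` bounds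
the linear term so that exactly the remaining part of the kinetic energy is used up. -/
theorem WEDfun_ge {X : Type*} [MetricSpace X] {φ : X → EReal} {ε : ℝ} {x : X} {u : ℝ → X}
    {m : ℝ → ℝ} (hadm : Admissible ε x u m) {a c K : ℝ} (hε : 0 < ε) (hc : 0 ≤ c) (hK : 0 ≤ K)
    (hlam : 0 < 1 - 8 * K * ε)
    (hlow : ∀ v, ((a - c * dist x v - K * dist x v ^ 2 : ℝ) : EReal) ≤ φ v) :
    ((a - ε * (c ^ 2 / (2 * (1 - 8 * K * ε))) : ℝ) : EReal) ≤ WEDfun φ ε u m := by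
  obtain ⟨hu0, ⟨hmd, hm2⟩, hfin⟩ := hadm
  have := isProbabilityMeasure_expMeasure hε
  set μ := expMeasure ε with hμ
  set lam := 1 - 8 * K * ε with hlamdef
  set g : ℝ → ℝ≥0∞ := fun t => ENNReal.ofReal (m t) with hg
  have hg2 : ∀ t, g t ^ 2 = ENNReal.ofReal (m t ^ 2) := fun t =>
    (ENNReal.ofReal_pow (hmd.nonneg t) 2).symm
  have hmm : AEMeasurable m (volume.restrict (Ioi 0)) := by
    have hcov : Ioi (0:ℝ) ⊆ ⋃ n : ℕ, Icc 0 (n : ℝ) := by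
      intro t ht
      obtain ⟨n, hn⟩ := exists_nat_ge t
      exact mem_iUnion.2 ⟨n, (le_of_lt ht), hn⟩
    refine AEMeasurable.mono_set hcov (aemeasurable_iUnion_iff.2 fun n => ?_)
    exact (hmd.locInt 0 self_mem_Ici n (mem_Ici.2 (Nat.cast_nonneg n))).1.aemeasurable
  have hgm : AEMeasurable g (volume.restrict (Ioi 0)) := hmm.ennreal_ofReal
  have hmμ : AEMeasurable m μ := hmm.mono_ac (expMeasure_ac ε)
  set R : ℝ → ℝ≥0∞ := fun t => ∫⁻ r in Ioo 0 t, g r with hR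
  set E : ℝ → ℝ≥0∞ := fun t => ∫⁻ r in Ioo 0 t, g r ^ 2 with hE
  have hRm : Measurable R := Monotone.measurable fun s t hst =>
    lintegral_mono_set (Ioo_subset_Ioo_right hst)
  have hEm : Measurable E := Monotone.measurable fun s t hst =>
    lintegral_mono_set (Ioo_subset_Ioo_right hst)
  have hfin' : ∫⁻ t, g t ^ 2 ∂μ < ⊤ := by simpa only [hg2] using hfin
  have hEint : ∫⁻ t, E t ∂μ = ENNReal.ofReal ε * ∫⁻ t, g t ^ 2 ∂μ :=
    lintegral_primitive hε (hgm.pow_const 2)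
  have hRint : ∫⁻ t, R t ^ 2 ∂μ ≤ ENNReal.ofReal (4 * ε ^ 2) * ∫⁻ t, g t ^ 2 ∂μ :=
    lintegral_sq_primitive_le hε hgm
  have hEtop : ∫⁻ t, E t ∂μ ≠ ⊤ := by
    rw [hEint]; exact ENNReal.mul_ne_top ofReal_ne_top hfin'.ne
  have hRtop' : ENNReal.ofReal (4 * ε ^ 2) * ∫⁻ t, g t ^ 2 ∂μ ≠ ⊤ :=
    ENNReal.mul_ne_top ofReal_ne_top hfin'.ne
  have hRtop : ∫⁻ t, R t ^ 2 ∂μ ≠ ⊤ := ne_top_of_le_ne_top hRtop' hRint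
  set M : ℝ := (∫⁻ t, g t ^ 2 ∂μ).toReal with hM
  have iM : Integrable (fun t => m t ^ 2) μ := by
    refine ⟨(hmμ.pow_const 2).aestronglyMeasurable, ?_⟩
    rw [hasFiniteIntegral_iff_ofReal (ae_of_all _ fun t => sq_nonneg _)]
    exact hfin
  have vM : ∫ t, m t ^ 2 ∂μ = M := by
    rw [integral_eq_lintegral_of_nonneg_ae (ae_of_all _ fun t => sq_nonneg _)
      iM.1, hM]
    simp only [hg2]
  have iE : Integrable (fun t => (E t).toReal) μ :=
    integrable_toReal_of_lintegral_ne_top hEm.aemeasurable hEtop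
  have vE : ∫ t, (E t).toReal ∂μ = ε * M := by
    rw [integral_toReal hEm.aemeasurable (ae_lt_top hEm hEtop), hEint, ENNReal.toReal_mul,
      ENNReal.toReal_ofReal hε.le]
  have iR : Integrable (fun t => (R t ^ 2).toReal) μ :=
    integrable_toReal_of_lintegral_ne_top (hRm.pow_const 2).aemeasurable hRtop
  have vR : ∫ t, (R t ^ 2).toReal ∂μ ≤ 4 * ε ^ 2 * M := by
    rw [integral_toReal (hRm.pow_const 2).aemeasurable (ae_lt_top (hRm.pow_const 2) hRtop)]
    refine (ENNReal.toReal_mono hRtop' hRint).trans_eq ?_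
    rw [ENNReal.toReal_mul, ENNReal.toReal_ofReal (by positivity)]
  have it : Integrable (fun t : ℝ => t) μ := by simpa using integrable_pow_expMeasure hε 1
  have vt : ∫ t, t ∂μ = ε := by simpa using integral_pow_expMeasure hε 1
  have hpt : ∀ t, 0 < t → ((a + ε / 2 * m t ^ 2 - lam / 2 * (E t).toReal - c ^ 2 / (2 * lam) * t
      - K * (R t ^ 2).toReal : ℝ) : EReal) ≤ wedIntegrand φ ε u m t := by
    intro t ht
    have hI : ∀ f : ℝ → ℝ, (∀ r, 0 ≤ f r) → IntegrableOn f (Icc 0 t) →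
        (∫⁻ r in Ioo 0 t, ENNReal.ofReal (f r)).toReal = ∫ r in Icc 0 t, f r := by
      intro f hf hfi
      rw [integral_eq_lintegral_of_nonneg_ae (ae_of_all _ hf) hfi.1,
        restrict_Ioo_eq_restrict_Icc]
    have i1 := hmd.locInt 0 self_mem_Ici t ht.le
    have i2 := hm2 0 self_mem_Ici t ht.le
    have hRt : (R t).toReal = ∫ r in Icc 0 t, m r := hI m hmd.nonneg i1
    have hEt : (E t).toReal = ∫ r in Icc 0 t, m r ^ 2 := by
      rw [← hI _ (fun r => sq_nonneg _) i2]
      simp only [hE, hg2]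
    have hd : dist x (u t) ≤ (R t).toReal := by
      rw [hRt, ← hu0]; exact hmd.dist_le 0 self_mem_Ici t ht.le ht.le
    have hyoung : c * (R t).toReal ≤ lam / 2 * (E t).toReal + c ^ 2 / (2 * lam) * t := by
      have iconst : IntegrableOn (fun _ : ℝ => c ^ 2 / (2 * lam)) (Icc 0 t) := by simp
      have h : ∫ r in Icc 0 t, c * m r ≤ ∫ r in Icc 0 t, (lam / 2 * m r ^ 2 + c ^ 2 / (2 * lam)) := by
        refine integral_mono (i1.const_mul c) ((i2.const_mul _).add iconst) fun r => ?_
        have : lam / 2 * m r ^ 2 + c ^ 2 / (2 * lam) - c * m r = (lam * m r - c) ^ 2 / (2 * lam) := by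
          field_simp; ring
        have h0 : 0 ≤ (lam * m r - c) ^ 2 / (2 * lam) := by positivity
        show c * m r ≤ lam / 2 * m r ^ 2 + c ^ 2 / (2 * lam)
        linarith
      rw [integral_const_mul, integral_add (i2.const_mul _) iconst, integral_const_mul, ← hRt,
        ← hEt] at h
      simpa [ht.le, mul_comm t] using h
    have hKd : K * dist x (u t) ^ 2 ≤ K * (R t ^ 2).toReal := by
      rw [ENNReal.toReal_pow]; gcongr
    have hcd : c * dist x (u t) ≤ c * (R t).toReal := by gcongr
    unfold wedIntegrand
    refine le_trans ?_ (add_le_add le_rfl (hlow (u t)))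
    rw [← EReal.coe_add, EReal.coe_le_coe_iff]
    linarith
  refine le_trans ?_ (eIntegral_mono ((ae_expMeasure_pos ε).mono hpt))
  have j1 : Integrable (fun t => a + ε / 2 * m t ^ 2) μ := (integrable_const a).add (iM.const_mul _)
  have j2 : Integrable (fun t => a + ε / 2 * m t ^ 2 - lam / 2 * (E t).toReal) μ :=
    j1.sub (iE.const_mul _)
  have j3 : Integrable (fun t => a + ε / 2 * m t ^ 2 - lam / 2 * (E t).toReal
      - c ^ 2 / (2 * lam) * t) μ := j2.sub (it.const_mul _)
  have j4 : Integrable (fun t => a + ε / 2 * m t ^ 2 - lam / 2 * (E t).toReal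
      - c ^ 2 / (2 * lam) * t - K * (R t ^ 2).toReal) μ := j3.sub (iR.const_mul _)
  rw [← hμ, eIntegral_coe j4, EReal.coe_le_coe_iff,
    integral_sub j3 (iR.const_mul _), integral_sub j2 (it.const_mul _),
    integral_sub j1 (iE.const_mul _), integral_add (integrable_const a) (iM.const_mul _)]
  have vt' : ∫ t, c ^ 2 / (2 * lam) * t ∂μ = c ^ 2 / (2 * lam) * ε := by
    rw [integral_const_mul, vt]
  simp only [integral_const_mul, vM, vE, vt', integral_const, probReal_univ, smul_eq_mul, one_mul]
  have h1 : K * ∫ t, (R t ^ 2).toReal ∂μ ≤ K * (4 * ε ^ 2 * M) := by gcongr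
  have h2 : ε / 2 * M - lam / 2 * (ε * M) = K * (4 * ε ^ 2 * M) := by rw [hlamdef]; ring
  linarith [mul_comm ε (c ^ 2 / (2 * lam))]

theorem admissible_const {X : Type*} [MetricSpace X] (ε : ℝ) (x : X) :
    Admissible ε x (fun _ => x) (fun _ => 0) := by
  refine ⟨rfl, ⟨⟨fun _ => le_rfl, ?_, ?_, ?_⟩, ?_⟩, ?_⟩
  · intros; simp
  · intros; simp
  · simp [tendsto_const_nhds]
  · intros; simp
  · simp

theorem Veps_le {X : Type*} [MetricSpace X] {φ : X → EReal} {ε : ℝ} {x : X} {u : ℝ → X}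
    {m : ℝ → ℝ} (hadm : Admissible ε x u m) : Veps φ ε x ≤ WEDfun φ ε u m :=
  iInf_le (fun p : {p : (ℝ → X) × (ℝ → ℝ) // Admissible ε x p.1 p.2} => WEDfun φ ε p.1.1 p.1.2)
    ⟨(u, m), hadm⟩

theorem Veps_le_self {X : Type*} [MetricSpace X] {φ : X → EReal} {ε : ℝ} (hε : 0 < ε) {x : X}
    {a : ℝ} (hx : φ x = a) : Veps φ ε x ≤ a := by
  have := isProbabilityMeasure_expMeasure hε
  refine (Veps_le (admissible_const ε x)).trans_eq ?_
  have : wedIntegrand φ ε (fun _ => x) (fun _ => 0) = fun _ => ((a : ℝ) : EReal) := by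
    ext t; simp [wedIntegrand, hx]
  unfold WEDfun
  rw [this, eIntegral_coe (integrable_const a)]
  simp

theorem le_coe_of_epos_le {y : EReal} {b : ℝ} (hb : 0 ≤ b) (h : epos y ≤ ENNReal.ofReal b) :
    y ≤ b := by
  have h1 : (epos y : EReal) ≤ (ENNReal.ofReal b : EReal) :=
    EReal.coe_ennreal_le_coe_ennreal_iff.2 h
  rw [epos_eq, EReal.coe_toENNReal_eq_max, EReal.coe_ennreal_ofReal, max_eq_left hb] at h1
  exact (le_max_right _ _).trans h1

/-- A strict bound on the slope at one point gives a global linear-quadratic lower bound on `φ`: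
near `x` it comes from the slope, away from `x` from coercivity. -/
theorem exists_lower_bound {X : Type*} [MetricSpace X] {φ : X → EReal} {ustar : X} {A B : ℝ}
    (hA : 0 ≤ A) (hB : 0 ≤ B) (hbot : ∀ v, φ v ≠ ⊥)
    (hco : ∀ u v : X, ((-(B * dist u v ^ 2 + (B * dist v ustar ^ 2 + A)) : ℝ) : EReal) ≤ φ u)
    {x : X} {a c : ℝ} (hx : φ x = a) (hc : 0 ≤ c)
    (hslope : slope φ x < ENNReal.ofReal c) :
    ∃ K : ℝ, 0 ≤ K ∧ ∀ v, ((a - c * dist x v - K * dist x v ^ 2 : ℝ) : EReal) ≤ φ v := by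
  have hev := eventually_lt_of_limsup_lt hslope
  rw [eventually_nhdsWithin_iff, Metric.eventually_nhds_iff] at hev
  obtain ⟨r, hr, hev⟩ := hev
  set A' := B * dist x ustar ^ 2 + A with hA'
  have hA0 : 0 ≤ A' := by positivity
  refine ⟨B + (A' + |a|) / r ^ 2, by positivity, fun v => ?_⟩
  rcases eq_or_ne v x with rfl | hvx
  · simp [hx]
  rcases lt_or_ge (dist v x) r with hd | hd
  · have h1 := hev hd hvx
    have hdpos : 0 < dist x v := dist_pos.2 hvx.symm
    have h2 : epos (φ x - φ v) ≤ ENNReal.ofReal (c * dist x v) := by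
      rw [ENNReal.ofReal_mul hc]
      exact (ENNReal.div_le_iff (by simpa using hvx.symm) ofReal_ne_top).1 h1.le
    have h3 := le_coe_of_epos_le (by positivity) h2
    rw [hx] at h3
    have hvbot := hbot v
    induction hv : φ v with
    | bot => exact absurd hv hvbot
    | top => exact le_top
    | coe b =>
      rw [hv] at h3
      norm_cast at h3 ⊢
      have : 0 ≤ (B + (A' + |a|) / r ^ 2) * dist x v ^ 2 := by positivity
      linarith
  · refine le_trans ?_ (hco v x)
    rw [EReal.coe_le_coe_iff, dist_comm v x]
    rw [dist_comm] at hd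
    have h1 : A' + |a| ≤ (A' + |a|) / r ^ 2 * dist x v ^ 2 := by
      rw [div_mul_eq_mul_div, le_div_iff₀ (by positivity)]
      gcongr
    have h2 : 0 ≤ c * dist x v := by positivity
    have := le_abs_self a
    nlinarith

/-- The pointwise inequality `|∂_w φ| ≤ |∂φ|` on the domain of `φ`. -/
theorem wedSlope_le_slope {X : Type*} [MetricSpace X] {σ : TopologicalSpace X} {φ : X → EReal}
    {ustar : X} {A B : ℝ} (hφ : LSCC σ φ ustar A B) {x : X} (hx : φ x ≠ ⊤) :
    wedSlope φ x ≤ slope φ x := by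
  obtain ⟨a, ha⟩ : ∃ a : ℝ, φ x = a :=
    ⟨(φ x).toReal, (EReal.coe_toReal hx (hφ.ne_bot x)).symm⟩
  refine le_of_forall_gt_imp_ge_of_dense fun C hC => ?_
  rcases eq_or_ne C ⊤ with rfl | hCtop
  · exact le_top
  obtain ⟨c, hc, rfl⟩ : ∃ c : ℝ, 0 ≤ c ∧ C = ENNReal.ofReal c :=
    ⟨C.toReal, toReal_nonneg, (ofReal_toReal hCtop).symm⟩
  obtain ⟨K, hK, hlow⟩ := exists_lower_bound hφ.hA hφ.hB hφ.ne_bot hφ.coercive ha hc hC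
  have hlim : Tendsto (fun ε : ℝ => 1 - 8 * K * ε) (𝓝[>] 0) (𝓝 1) := by
    have : Tendsto (fun ε : ℝ => 1 - 8 * K * ε) (𝓝 0) (𝓝 (1 - 8 * K * 0)) :=
      Continuous.tendsto (by fun_prop) 0
    simp only [mul_zero, sub_zero] at this
    exact this.mono_left nhdsWithin_le_nhds
  have hG : ∀ᶠ ε in 𝓝[>] (0:ℝ), Geps φ ε x
      ≤ (ENNReal.ofReal (c ^ 2 / (1 - 8 * K * ε))) ^ (1 / 2 : ℝ) := by
    filter_upwards [hlim.eventually_const_lt zero_lt_one, self_mem_nhdsWithin] with ε h1 hε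
    have hε : 0 < ε := hε
    have hV1 : Veps φ ε x ≤ a := Veps_le_self hε ha
    have hV2 : ((a - ε * (c ^ 2 / (2 * (1 - 8 * K * ε))) : ℝ) : EReal) ≤ Veps φ ε x :=
      le_iInf fun p => WEDfun_ge p.2 hε hc hK h1 hlow
    have hVtop : Veps φ ε x ≠ ⊤ := ne_top_of_le_ne_top (EReal.coe_ne_top a) hV1
    rw [Geps, if_neg hVtop, ha]
    refine ENNReal.rpow_le_rpow ?_ (by norm_num)
    have h3 : epos (a - Veps φ ε x) ≤ ENNReal.ofReal (ε * (c ^ 2 / (2 * (1 - 8 * K * ε)))) := by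
      rw [← epos_coe]
      refine epos_mono ((EReal.sub_le_sub le_rfl hV2).trans_eq ?_)
      rw [← EReal.coe_sub]; congr 1; ring
    calc 2 * epos (a - Veps φ ε x) / ENNReal.ofReal ε
        ≤ 2 * ENNReal.ofReal (ε * (c ^ 2 / (2 * (1 - 8 * K * ε)))) / ENNReal.ofReal ε := by gcongr
      _ = ENNReal.ofReal (c ^ 2 / (1 - 8 * K * ε)) := by
        rw [show (2 : ℝ≥0∞) = ENNReal.ofReal 2 by simp, ← ENNReal.ofReal_mul (by norm_num),
          ← ENNReal.ofReal_div_of_pos hε]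
        congr 1
        field_simp
  have hlim2 : Tendsto (fun ε : ℝ => (ENNReal.ofReal (c ^ 2 / (1 - 8 * K * ε))) ^ (1 / 2 : ℝ))
      (𝓝[>] 0) (𝓝 (ENNReal.ofReal c)) := by
    have h1 : Tendsto (fun ε : ℝ => c ^ 2 / (1 - 8 * K * ε)) (𝓝[>] 0) (𝓝 (c ^ 2)) := by
      have h := (tendsto_const_nhds (x := c ^ 2)).div hlim one_ne_zero
      rw [div_one] at h
      exact h
    have h2 := (ENNReal.tendsto_ofReal h1).ennrpow_const (1 / 2)
    rwa [ofReal_sq_rpow_half hc] at h2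
  exact (limsup_le_limsup hG).trans_eq hlim2.limsup_eq

/-! ### Descending curves bound the WED slope from below -/

theorem admissible_of_lipschitz {X : Type*} [MetricSpace X] {ε : ℝ} (hε : 0 < ε) {u : ℝ → X}
    {K : NNReal} (hu : LipschitzWith K u) :
    ∃ m : ℝ → ℝ, (∀ t, 0 ≤ m t) ∧ (∀ t, m t ≤ K) ∧ Admissible ε (u 0) u m := by
  obtain ⟨m, h0, hK, hmm, hd, hl⟩ := exists_metricDeriv hu
  have := isProbabilityMeasure_expMeasure hε
  have hsq : ∀ t, m t ^ 2 ≤ (K : ℝ) ^ 2 := fun t => by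
    have := h0 t; have := hK t; gcongr
  refine ⟨m, h0, hK, rfl, ⟨⟨h0, ?_, ?_, ?_⟩, ?_⟩, ?_⟩
  · intro s _ t _
    refine Measure.integrableOn_of_bounded (M := K) (by simp) hmm.aestronglyMeasurable
      (ae_of_all _ fun t => ?_)
    rw [Real.norm_of_nonneg (h0 t)]; exact hK t
  · intro s _ t _ hst; exact hd s t hst
  · refine ae_restrict_of_ae ?_
    filter_upwards [hl] with t ht
    exact ht.mono_left (nhdsWithin_mono _ fun y hy => hy.2)
  · intro s _ t _
    refine Measure.integrableOn_of_bounded (M := (K : ℝ) ^ 2) (by simp)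
      (hmm.pow_const 2).aestronglyMeasurable (ae_of_all _ fun t => ?_)
    rw [Real.norm_of_nonneg (sq_nonneg _)]; exact hsq t
  · calc ∫⁻ t, ENNReal.ofReal (m t ^ 2) ∂expMeasure ε
        ≤ ∫⁻ _, ENNReal.ofReal ((K : ℝ) ^ 2) ∂expMeasure ε :=
          lintegral_mono fun t => ENNReal.ofReal_le_ofReal (hsq t)
      _ < ⊤ := by simp

/-- A `1`-Lipschitz curve from `x` along which `φ` decreases at rate at least `c` forces
`c ≤ |∂_w φ|(x)`: the same curve run at speed `c` is a competitor for `V_ε(x)`, with energy at most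
`φ(x) - ε c² / 2 + O(ε²)`. -/
theorem le_wedSlope_of_curve {X : Type*} [MetricSpace X] {φ : X → EReal} {x : X} {a c ρ : ℝ}
    (hx : φ x = a) (hc : 0 < c) (hρ : 0 < ρ) {u : ℝ → X} (hu : LipschitzWith 1 u) (hu0 : u 0 = x)
    (hdesc : ∀ t, 0 ≤ t → t ≤ ρ → φ (u t) ≤ ((a - c * t : ℝ) : EReal)) :
    ENNReal.ofReal c ≤ wedSlope φ x := by
  -- `u` run at speed `c` and stopped at time `ρ / c`
  set v : ℝ → X := fun t => u (max 0 (min (c * t) ρ)) with hv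
  have hvl : LipschitzWith c.toNNReal v := by
    refine LipschitzWith.of_dist_le_mul fun s t => ?_
    refine (hu.dist_le_mul _ _).trans ?_
    rw [NNReal.coe_one, one_mul, Real.dist_eq, Real.dist_eq, Real.coe_toNNReal _ hc.le]
    have h1 := abs_max_sub_max_le_abs (min (c * s) ρ) (min (c * t) ρ) 0
    have h2 := abs_min_sub_min_le_max (c * s) ρ (c * t) ρ
    rw [max_comm 0, max_comm 0]
    refine h1.trans (h2.trans ?_)
    rw [sub_self, abs_zero, max_eq_left (abs_nonneg _), ← mul_sub, abs_mul, abs_of_pos hc]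
  have hv0 : v 0 = x := by simp [hv, hρ.le, hu0]
  have hG : ∀ᶠ ε in 𝓝[>] (0:ℝ), (ENNReal.ofReal (c ^ 2 - c ^ 3 / ρ * ε)) ^ (1 / 2 : ℝ)
      ≤ Geps φ ε x := by
    filter_upwards [self_mem_nhdsWithin] with ε hε
    have hε : 0 < ε := hε
    have := isProbabilityMeasure_expMeasure hε
    obtain ⟨m, hm0, hmK, hadm⟩ := admissible_of_lipschitz hε hvl
    rw [hv0] at hadm
    rw [Real.coe_toNNReal _ hc.le] at hmK
    have i1 : Integrable (fun t : ℝ => t) (expMeasure ε) := by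
      simpa using integrable_pow_expMeasure hε 1
    have v1 : ∫ t, t ∂expMeasure ε = ε := by simpa using integral_pow_expMeasure hε 1
    have i2 := integrable_pow_expMeasure hε 2
    have v2 := integral_pow_expMeasure hε 2
    have hpt : ∀ t, 0 < t → wedIntegrand φ ε v m t ≤
        (((a + ε / 2 * c ^ 2) - c ^ 2 * t + c ^ 3 / (4 * ρ) * t ^ 2 : ℝ) : EReal) := by
      intro t ht
      have hcl0 : 0 ≤ min (c * t) ρ := by positivity
      have h1 : φ (v t) ≤ ((a - c * min (c * t) ρ : ℝ) : EReal) := by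
        simp only [hv, max_eq_right hcl0]
        exact hdesc _ hcl0 (min_le_right _ _)
      -- `min y ρ ≥ y - y² / (4ρ)` turns the tail `c t > ρ` into an `O(ε²)` error
      have h2 : c * t - (c * t) ^ 2 / (4 * ρ) ≤ min (c * t) ρ := by
        refine le_min (by linarith [show 0 ≤ (c * t) ^ 2 / (4 * ρ) by positivity]) ?_
        have : ρ - (c * t - (c * t) ^ 2 / (4 * ρ)) = (c * t - 2 * ρ) ^ 2 / (4 * ρ) := by
          field_simp; ring
        linarith [show 0 ≤ (c * t - 2 * ρ) ^ 2 / (4 * ρ) by positivity]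
      have h3 : ε / 2 * m t ^ 2 ≤ ε / 2 * c ^ 2 := by
        have := hm0 t; have := hmK t; gcongr
      unfold wedIntegrand
      refine (add_le_add le_rfl h1).trans ?_
      rw [← EReal.coe_add, EReal.coe_le_coe_iff]
      have h4 := mul_le_mul_of_nonneg_left h2 hc.le
      have h5 : c * (c * t - (c * t) ^ 2 / (4 * ρ)) = c ^ 2 * t - c ^ 3 / (4 * ρ) * t ^ 2 := by
        field_simp
      linarith
    have j1 : Integrable (fun t => (a + ε / 2 * c ^ 2) - c ^ 2 * t) (expMeasure ε) :=
      (integrable_const _).sub (i1.const_mul _)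
    have j2 : Integrable (fun t => (a + ε / 2 * c ^ 2) - c ^ 2 * t + c ^ 3 / (4 * ρ) * t ^ 2)
      (expMeasure ε) := j1.add (i2.const_mul _)
    have hV : Veps φ ε x ≤ ((a - ε * (c ^ 2 - c ^ 3 / ρ * ε) / 2 : ℝ) : EReal) := by
      refine (Veps_le hadm).trans
        ((eIntegral_mono ((ae_expMeasure_pos ε).mono hpt)).trans_eq ?_)
      rw [eIntegral_coe j2, integral_add j1 (i2.const_mul _),
        integral_sub (integrable_const _) (i1.const_mul _)]
      have v1' : ∫ t, c ^ 2 * t ∂expMeasure ε = c ^ 2 * ε := by rw [integral_const_mul, v1]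
      simp only [integral_const_mul, v1', v2, integral_const, probReal_univ, smul_eq_mul, one_mul]
      congr 1
      norm_num [Nat.factorial]
      field_simp
      ring
    rw [Geps]
    split_ifs with htop
    · exact le_top
    refine ENNReal.rpow_le_rpow ?_ (by norm_num)
    have h3 : ENNReal.ofReal (ε * (c ^ 2 - c ^ 3 / ρ * ε) / 2) ≤ epos (φ x - Veps φ ε x) := by
      rw [← epos_coe, hx]
      refine epos_mono (le_trans (le_of_eq ?_) (EReal.sub_le_sub le_rfl hV))
      rw [← EReal.coe_sub]; congr 1; ring
    calc ENNReal.ofReal (c ^ 2 - c ^ 3 / ρ * ε)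
        = 2 * ENNReal.ofReal (ε * (c ^ 2 - c ^ 3 / ρ * ε) / 2) / ENNReal.ofReal ε := by
          rw [show (2 : ℝ≥0∞) = ENNReal.ofReal 2 by simp, ← ENNReal.ofReal_mul (by norm_num),
            ← ENNReal.ofReal_div_of_pos hε]
          congr 1
          field_simp
      _ ≤ _ := by gcongr
  have hlim : Tendsto (fun ε : ℝ => (ENNReal.ofReal (c ^ 2 - c ^ 3 / ρ * ε)) ^ (1 / 2 : ℝ))
      (𝓝[>] 0) (𝓝 (ENNReal.ofReal c)) := by
    have h1 : Tendsto (fun ε : ℝ => c ^ 2 - c ^ 3 / ρ * ε) (𝓝[>] 0) (𝓝 (c ^ 2)) := by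
      have : Tendsto (fun ε : ℝ => c ^ 2 - c ^ 3 / ρ * ε) (𝓝 0) (𝓝 (c ^ 2 - c ^ 3 / ρ * 0)) :=
        Continuous.tendsto (by fun_prop) 0
      simp only [mul_zero, sub_zero] at this
      exact this.mono_left nhdsWithin_le_nhds
    have h2 := (ENNReal.tendsto_ofReal h1).ennrpow_const (1 / 2)
    rwa [ofReal_sq_rpow_half hc.le] at h2
  rw [← hlim.limsup_eq]
  exact limsup_le_limsup hG

/-! ### Descending curves from a lower bound on the local slope -/

/-- The `σ`-limit of a sequence is unchanged by perturbations of vanishing distance (MT2). -/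
theorem tendsto_of_dist {X : Type*} [MetricSpace X] {σ : TopologicalSpace X} (hcomp : Compatible σ)
    {u v : ℕ → X} {x : X} (hu : Tendsto u atTop (@nhds X σ x))
    (hd : Tendsto (fun n => dist (v n) (u n)) atTop (𝓝 (0 : ℝ))) :
    Tendsto v atTop (@nhds X σ x) := by
  rw [@tendsto_nhds X σ]
  intro U hU hx
  obtain ⟨V, hV, hxV, δ, hδ, h⟩ := hcomp.mt2 U hU x hx
  have h1 := (@tendsto_nhds X σ ℕ x u atTop).1 hu V hV hxV
  filter_upwards [h1, hd.eventually_lt_const hδ] with n hn1 hn2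
  exact h _ ((Metric.infDist_le_dist_of_mem (mem_preimage.1 hn1)).trans_lt hn2)

/-- The distance is `σ`-sequentially lower semicontinuous (MT1), in terms of real bounds. -/
theorem dist_le_of_tendsto {X : Type*} [MetricSpace X] {σ : TopologicalSpace X}
    (hcomp : Compatible σ) {u v : ℕ → X} {x y : X} (hu : Tendsto u atTop (@nhds X σ x))
    (hv : Tendsto v atTop (@nhds X σ y)) {f : ℕ → ℝ} {l : ℝ}
    (hf : Tendsto f atTop (𝓝 l)) (h : ∀ n, dist (u n) (v n) ≤ f n) : dist x y ≤ l := by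
  have hl : 0 ≤ l := ge_of_tendsto' hf fun n => dist_nonneg.trans (h n)
  have h1 := hcomp.mt1 u v x y hu hv
  have h2 : liminf (fun n => ENNReal.ofReal (dist (u n) (v n))) atTop ≤
      liminf (fun n => ENNReal.ofReal (f n)) atTop :=
    liminf_le_liminf (Eventually.of_forall fun n => ENNReal.ofReal_le_ofReal (h n))
  rw [(ENNReal.tendsto_ofReal hf).liminf_eq] at h2
  exact (ENNReal.ofReal_le_ofReal_iff hl).1 (h1.trans h2)

/-- Lower semicontinuity of `φ`, in terms of real upper bounds. -/
theorem LSCC.le_of_tendsto {X : Type*} [MetricSpace X] {σ : TopologicalSpace X} {φ : X → EReal}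
    {ustar : X} {A B : ℝ} (hφ : LSCC σ φ ustar A B) {u : ℕ → X} {x : X}
    (hb : ∃ C : ℝ, ∀ n k, dist (u n) (u k) ≤ C) (hu : Tendsto u atTop (@nhds X σ x))
    {f : ℕ → ℝ} {l : ℝ} (hf : Tendsto f atTop (𝓝 l)) (h : ∀ n, φ (u n) ≤ (f n : EReal)) :
    φ x ≤ (l : EReal) := by
  refine (hφ.lsc u x hb hu).trans ?_
  have h1 : Tendsto (fun n => (f n : EReal)) atTop (𝓝 (l : EReal)) :=
    (continuous_coe_real_ereal.tendsto l).comp hf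
  rw [← h1.liminf_eq]
  exact liminf_le_liminf (Eventually.of_forall h)

theorem slope_le_of_local {X : Type*} [MetricSpace X] {φ : X → EReal} {z : X} {b c r : ℝ}
    (hz : φ z = b) (hr : 0 < r)
    (h : ∀ w, dist w z < r → ((b - c * dist w z : ℝ) : EReal) ≤ φ w) :
    slope φ z ≤ ENNReal.ofReal c := by
  refine limsup_le_of_le (by isBoundedDefault) ?_
  have : ∀ᶠ w in 𝓝[≠] z, dist w z < r := nhdsWithin_le_nhds (Metric.ball_mem_nhds z hr)
  filter_upwards [this, self_mem_nhdsWithin] with w hw hne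
  have hd : 0 < dist z w := dist_pos.2 (Ne.symm hne)
  refine ENNReal.div_le_of_le_mul ?_
  have h1 : epos (φ z - φ w) ≤ epos ((c * dist z w : ℝ) : EReal) := by
    refine epos_mono ((EReal.sub_le_sub le_rfl (h w hw)).trans (le_of_eq ?_))
    rw [hz, ← EReal.coe_sub, dist_comm w z]; congr 1; ring
  rw [epos_coe] at h1
  rwa [← ENNReal.ofReal_mul' hd.le]

/-- If the slope exceeds `c` throughout the ball of radius `η` around `y` (where `φ` does not
exceed `φ y`), then `φ` drops by `c η` within distance `η` of `y`. A minimiser of `φ + c d(·,y)` on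
the closed ball exists by compactness; it cannot be interior, since its slope would be at most `c`,
so it lies on the sphere. -/
theorem exists_descent_step {X : Type*} [MetricSpace X] {σ : TopologicalSpace X}
    (hcomp : Compatible σ) {φ : X → EReal} {ustar : X} {A B : ℝ} (hφ : LSCC σ φ ustar A B)
    {y : X} {b c η : ℝ} (hy : φ y = b) (hc : 0 < c) (hη : 0 < η)
    (h : ∀ z, dist z y < η → φ z ≤ b → ENNReal.ofReal c < slope φ z) :
    ∃ z, dist z y ≤ η ∧ φ z ≤ ((b - c * η : ℝ) : EReal) := by
  set S : Set X := {z | dist z y ≤ η ∧ φ z ≤ b} with hS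
  set F : X → ℝ := fun z => (φ z).toReal + c * dist z y with hF
  have hcoe : ∀ z, φ z ≤ b → φ z = ((φ z).toReal : EReal) := fun z hz =>
    (EReal.coe_toReal (ne_top_of_le_ne_top (EReal.coe_ne_top b) hz) (hφ.ne_bot z)).symm
  have hyS : y ∈ S := ⟨by simpa using hη.le, hy.le⟩
  have hbdd : BddBelow (F '' S) := by
    refine ⟨-(B * η ^ 2 + (B * dist y ustar ^ 2 + A)), ?_⟩
    rintro _ ⟨z, ⟨hz1, hz2⟩, rfl⟩
    have h1 := hφ.coercive z y
    rw [hcoe z hz2, EReal.coe_le_coe_iff] at h1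
    have h2 : B * dist z y ^ 2 ≤ B * η ^ 2 := by have := hφ.hB; gcongr
    have h3 : 0 ≤ c * dist z y := by positivity
    simp only [hF]; linarith
  obtain ⟨v, -, hv, hvS⟩ := exists_seq_tendsto_sInf (Set.Nonempty.image F ⟨y, hyS⟩) hbdd
  set I := sInf (F '' S) with hI
  choose z hzS hzv using hvS
  have hdb : ∀ n k, dist (z n) (z k) ≤ η + η := fun n k =>
    (dist_triangle_right _ _ y).trans (add_le_add (hzS n).1 (hzS k).1)
  obtain ⟨x, j, hj, hx⟩ := hφ.cpt z ⟨b, fun n => (hzS n).2⟩ ⟨_, hdb⟩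
  obtain ⟨δ, hδ, i, hi, hlim⟩ := (isCompact_Icc (a := (0:ℝ)) (b := η)).tendsto_subseq
    (x := fun n => dist (z (j n)) y) fun n => ⟨dist_nonneg, (hzS _).1⟩
  have hx' : Tendsto (fun n => z (j (i n))) atTop (@nhds X σ x) := hx.comp hi.tendsto_atTop
  have hxd : dist x y ≤ δ := dist_le_of_tendsto hcomp hx' (@tendsto_const_nhds X σ ℕ y atTop) hlim
    fun n => le_rfl
  have hdb' : ∃ C : ℝ, ∀ n k, dist (z (j (i n))) (z (j (i k))) ≤ C := ⟨_, fun n k => hdb _ _⟩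
  have hxb : φ x ≤ b := hφ.le_of_tendsto hdb' hx' tendsto_const_nhds fun n => (hzS _).2
  have hxI : φ x ≤ ((I - c * δ : ℝ) : EReal) := by
    refine hφ.le_of_tendsto (f := fun n => v (j (i n)) - c * dist (z (j (i n))) y) hdb' hx'
      ((hv.comp (hj.comp hi).tendsto_atTop).sub (hlim.const_mul c)) fun n => ?_
    rw [← hzv, hcoe _ (hzS (j (i n))).2, EReal.coe_le_coe_iff]
    simp [hF]
  have hxS : x ∈ S := ⟨hxd.trans hδ.2, hxb⟩
  have hxr := hcoe x hxb
  rw [hxr, EReal.coe_le_coe_iff] at hxI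
  have hmin : ∀ w ∈ S, F x ≤ F w := fun w hw => by
    have h1 : I ≤ F w := csInf_le hbdd ⟨w, hw, rfl⟩
    have h2 : c * dist x y ≤ c * δ := by gcongr
    simp only [hF] at h1 ⊢; linarith
  have hFy : F x ≤ b := by simpa [hF, hy] using hmin y hyS
  rcases lt_or_eq_of_le hxS.1 with hlt | heq
  · exfalso
    refine (h x hlt hxb).not_ge (slope_le_of_local hxr (sub_pos.2 hlt) fun w hw => ?_)
    have htri := dist_triangle w x y
    rcases le_total (φ w) b with hwb | hwb
    · have h1 := hmin w ⟨by linarith, hwb⟩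
      rw [hcoe w hwb, EReal.coe_le_coe_iff]
      have h2 := mul_le_mul_of_nonneg_left htri hc.le
      simp only [hF] at h1; linarith
    · refine le_trans ?_ hwb
      rw [EReal.coe_le_coe_iff]
      have h1 : 0 ≤ c * dist x y := by positivity
      have h2 : 0 ≤ c * dist w x := by positivity
      simp only [hF] at hFy; linarith
  · refine ⟨x, hxS.1, ?_⟩
    rw [hxr, EReal.coe_le_coe_iff]
    simp only [hF, heq] at hFy; linarith

/-- Iterating the descent step gives a piecewise constant curve of mesh `η`, nearly `1`-Lipschitz and
nearly descending at rate `c`. -/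
theorem exists_discrete_curve {X : Type*} [MetricSpace X] {σ : TopologicalSpace X}
    (hcomp : Compatible σ) {φ : X → EReal} {ustar : X} {A B : ℝ} (hφ : LSCC σ φ ustar A B)
    {x : X} {a c r η : ℝ} (hx : φ x = a) (hc : 0 < c) (hη : 0 < η)
    (h : ∀ z, dist z x < r → φ z ≤ a → ENNReal.ofReal c < slope φ z) :
    ∃ u : ℝ → X, u 0 = x ∧ (∀ s t, 0 ≤ s → 0 ≤ t → dist (u s) (u t) ≤ |s - t| + η) ∧
      ∀ t, 0 ≤ t → t ≤ r → φ (u t) ≤ ((a - c * (t - η) : ℝ) : EReal) := by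
  have hnxt : ∀ y, ∃ z, dist z y ≤ η ∧ ∀ b : ℝ, φ y = b →
      (∀ z, dist z y < η → φ z ≤ b → ENNReal.ofReal c < slope φ z) →
        φ z ≤ ((b - c * η : ℝ) : EReal) := by
    intro y
    by_cases hy : ∃ b : ℝ, φ y = b ∧ ∀ z, dist z y < η → φ z ≤ b → ENNReal.ofReal c < slope φ z
    · obtain ⟨b, hb, hy⟩ := hy
      obtain ⟨z, hz1, hz2⟩ := exists_descent_step hcomp hφ hb hc hη hy
      refine ⟨z, hz1, fun b' hb' _ => ?_⟩
      rw [hb, EReal.coe_eq_coe_iff] at hb'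
      rwa [← hb']
    · exact ⟨y, by simpa using hη.le, fun b hb hy' => absurd ⟨b, hb, hy'⟩ hy⟩
  choose nxt hn1 hn2 using hnxt
  set y : ℕ → X := fun k => nxt^[k] x with hydef
  have hy0 : y 0 = x := rfl
  have hys : ∀ k, y (k + 1) = nxt (y k) := fun k => Function.iterate_succ_apply' nxt k x
  have hdist : ∀ i j, i ≤ j → dist (y i) (y j) ≤ ((j : ℝ) - i) * η := by
    intro i j hij
    induction j, hij using Nat.le_induction with
    | base => simp
    | succ j hij ih =>
      have h1 := dist_triangle (y i) (y j) (y (j + 1))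
      have h2 : dist (y j) (y (j + 1)) ≤ η := by rw [hys, dist_comm]; exact hn1 _
      push_cast; linarith
  have hen : ∀ k : ℕ, k * η ≤ r → φ (y k) ≤ ((a - c * (k * η) : ℝ) : EReal) := by
    intro k
    induction k with
    | zero => intro _; simp [hy0, hx]
    | succ k ih =>
      intro hk
      push_cast at hk
      have hk0 := ih (by linarith)
      have hb : φ (y k) = ((φ (y k)).toReal : EReal) := (EReal.coe_toReal
        (ne_top_of_le_ne_top (EReal.coe_ne_top _) hk0) (hφ.ne_bot _)).symm
      have hk1 := hk0
      rw [hb, EReal.coe_le_coe_iff] at hk1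
      have hck : 0 ≤ c * (k * η) := by positivity
      rw [hys]
      refine (hn2 (y k) _ hb fun z hz hz' => h z ?_ ?_).trans ?_
      · have h1 := dist_triangle z (y k) x
        have h2 := hdist 0 k (Nat.zero_le _)
        rw [hy0, dist_comm] at h2
        simp only [Nat.cast_zero, sub_zero] at h2
        linarith
      · refine hz'.trans ?_
        rw [EReal.coe_le_coe_iff]; linarith
      · rw [EReal.coe_le_coe_iff]; push_cast; linarith
  refine ⟨fun t => y ⌊t / η⌋₊, by simp [hy0], ?_, ?_⟩
  · have key : ∀ s t, 0 ≤ s → s ≤ t → dist (y ⌊s / η⌋₊) (y ⌊t / η⌋₊) ≤ (t - s) + η := by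
      intro s t hs hst
      have h1 := hdist _ _ (Nat.floor_le_floor (div_le_div_of_nonneg_right hst hη.le))
      have h2 := Nat.floor_le (div_nonneg (hs.trans hst) hη.le)
      have h3 := (Nat.lt_floor_add_one (s / η)).le
      have h4 : ((⌊t / η⌋₊ : ℝ) - ⌊s / η⌋₊) * η ≤ (t / η - (s / η - 1)) * η := by gcongr; linarith
      have h5 : (t / η - (s / η - 1)) * η = (t - s) + η := by field_simp; ring
      linarith
    intro s t hs ht
    rcases le_total s t with hst | hst
    · rw [abs_sub_comm, abs_of_nonneg (sub_nonneg.2 hst)]; exact key s t hs hst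
    · rw [abs_of_nonneg (sub_nonneg.2 hst), dist_comm]; exact key t s ht hst
  · intro t ht htr
    have h2 : (⌊t / η⌋₊ : ℝ) * η ≤ t := (le_div_iff₀ hη).1 (Nat.floor_le (div_nonneg ht hη.le))
    have h3 : t < (⌊t / η⌋₊ + 1 : ℝ) * η := (div_lt_iff₀ hη).1 (Nat.lt_floor_add_one (t / η))
    refine (hen _ (h2.trans htr)).trans ?_
    rw [EReal.coe_le_coe_iff]
    have : c * (t - η) ≤ c * (⌊t / η⌋₊ * η) := by gcongr; linarith
    linarith

/-- Diagonal extraction: if every subsequence of each `v · k` has a convergent subsequence, then one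
sequence of indices tending to infinity serves all `k`. -/
theorem exists_diagonal {Y : Type*} {τ : TopologicalSpace Y} (v : ℕ → ℕ → Y)
    (h : ∀ k, ∀ j : ℕ → ℕ, StrictMono j → ∃ (y : Y) (i : ℕ → ℕ), StrictMono i ∧
      Tendsto (fun n => v (j (i n)) k) atTop (𝓝 y)) :
    ∃ d : ℕ → ℕ, Tendsto d atTop atTop ∧
      ∀ k, ∃ y, Tendsto (fun n => v (d n) k) atTop (𝓝 y) := by
  have h' : ∀ k, ∀ j : {j : ℕ → ℕ // StrictMono j}, ∃ (y : Y) (i : {j : ℕ → ℕ // StrictMono j}),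
      Tendsto (fun n => v (j.1 (i.1 n)) k) atTop (𝓝 y) := fun k j => by
    obtain ⟨y, i, hi, hy⟩ := h k j.1 j.2
    exact ⟨y, ⟨i, hi⟩, hy⟩
  choose lim sub hsub using h'
  let J : ℕ → {j : ℕ → ℕ // StrictMono j} := fun k =>
    Nat.rec ⟨id, strictMono_id⟩ (fun k j => ⟨j.1 ∘ (sub k j).1, j.2.comp (sub k j).2⟩) k
  have hJs : ∀ k, (J (k + 1)).1 = (J k).1 ∘ (sub k (J k)).1 := fun k => rfl
  have hJ : ∀ k n, k ≤ n → ∀ p, ∃ q, p ≤ q ∧ (J n).1 p = (J k).1 q := by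
    intro k n hkn
    induction n, hkn using Nat.le_induction with
    | base => exact fun p => ⟨p, le_rfl, rfl⟩
    | succ n hkn ih =>
      intro p
      obtain ⟨q, hq, he⟩ := ih ((sub n (J n)).1 p)
      exact ⟨q, ((sub n (J n)).2.le_apply).trans hq, by rw [hJs, Function.comp_apply, he]⟩
  refine ⟨fun n => (J n).1 n, tendsto_atTop_mono (fun n => (J n).2.le_apply) tendsto_id,
    fun k => ⟨lim k (J k), ?_⟩⟩
  have hq : ∀ n, ∃ q, n ≤ q ∧ (k + 1 ≤ n → (J n).1 n = (J (k + 1)).1 q) := by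
    intro n
    by_cases hn : k + 1 ≤ n
    · obtain ⟨q, hq, he⟩ := hJ (k + 1) n hn n
      exact ⟨q, hq, fun _ => he⟩
    · exact ⟨n, le_rfl, fun h => absurd h hn⟩
  choose q hq1 hq2 using hq
  refine ((hsub k (J k)).comp (tendsto_atTop_mono hq1 tendsto_id)).congr' ?_
  filter_upwards [eventually_ge_atTop (k + 1)] with n hn
  rw [hq2 n hn, hJs]; rfl

theorem exists_lipschitz_extension {X : Type*} [MetricSpace X] [CompleteSpace X] {U : ℚ → X}
    (hU : ∀ p q : ℚ, dist (U p) (U q) ≤ |(p : ℝ) - q|) :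
    ∃ u : ℝ → X, LipschitzWith 1 u ∧ ∀ q : ℚ, u q = U q := by
  have hL : LipschitzWith 1 U := LipschitzWith.of_dist_le_mul fun p q => by
    simpa [Rat.dist_eq] using hU p q
  have hd := Rat.isDenseEmbedding_coe_real.isDenseInducing
  have hue : IsUniformInducing ((↑) : ℚ → ℝ) := Rat.isUniformEmbedding_coe_real.isUniformInducing
  have hc := uniformContinuous_uniformly_extend hue hd.dense hL.uniformContinuous
  have heq : ∀ q : ℚ, hd.extend U q = U q := fun q => hd.extend_eq hL.continuous q
  refine ⟨hd.extend U, LipschitzWith.of_dist_le_mul fun s t => ?_, heq⟩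
  have hcont : Continuous (hd.extend U) := hc.continuous
  refine isClosed_property2 (e := ((↑) : ℚ → ℝ)) (p := fun s t => dist (hd.extend U s) (hd.extend U t) ≤
    ((1 : NNReal) : ℝ) * dist s t) hd.dense ?_ ?_ s t
  · exact isClosed_le (by fun_prop) (by fun_prop)
  · intro p q
    rw [heq, heq]
    simpa [Real.dist_eq] using hU p q

theorem exists_rat_seq (t : ℝ) : ∃ q : ℕ → ℚ, Tendsto (fun n => (q n : ℝ)) atTop (𝓝 t) := by
  have h : ∀ n : ℕ, ∃ q : ℚ, t < q ∧ (q : ℝ) < t + 1 / ((n : ℝ) + 1) := fun n =>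
    exists_rat_btwn (by have : 0 < 1 / ((n : ℝ) + 1) := by positivity
                        linarith)
  choose q h1 h2 using h
  refine ⟨q, tendsto_of_tendsto_of_tendsto_of_le_of_le tendsto_const_nhds ?_
    (fun n => (h1 n).le) fun n => (h2 n).le⟩
  simpa using tendsto_one_div_add_atTop_nhds_zero_nat.const_add t

/-- If the slope exceeds `c` throughout a ball around `x` (where `φ` does not exceed `φ x`), there is
a `1`-Lipschitz curve from `x` along which `φ` decreases at rate at least `c`: the limit of the
discrete curves as the mesh vanishes, extracted at rational times and extended by completeness. -/
theorem exists_descent_curve {X : Type*} [MetricSpace X] [CompleteSpace X]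
    {σ : TopologicalSpace X} (hcomp : Compatible σ) {φ : X → EReal} {ustar : X} {A B : ℝ}
    (hφ : LSCC σ φ ustar A B) {x : X} {a c r : ℝ} (hx : φ x = a) (hc : 0 < c) (hr : 0 < r)
    (h : ∀ z, dist z x < r → φ z ≤ a → ENNReal.ofReal c < slope φ z) :
    ∃ u : ℝ → X, LipschitzWith 1 u ∧ u 0 = x ∧
      ∀ t, 0 ≤ t → t ≤ r → φ (u t) ≤ ((a - c * t : ℝ) : EReal) := by
  set η : ℕ → ℝ := fun n => 1 / ((n : ℝ) + 1) with hη
  have hη0 : ∀ n, 0 < η n := fun n => by positivity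
  have hη1 : ∀ n, η n ≤ 1 := fun n => by
    simp only [hη]; rw [div_le_one (by positivity)]; simp
  have hηlim : Tendsto η atTop (𝓝 0) := tendsto_one_div_add_atTop_nhds_zero_nat
  choose u hu0 hud hue using fun n => exists_discrete_curve hcomp hφ hx hc (hη0 n) h
  -- time is clamped to `[0, r]`, where the energy estimate is available
  set cl : ℝ → ℝ := fun t => max 0 (min t r) with hcl
  have hcl0 : ∀ t, 0 ≤ cl t := fun t => le_max_left _ _
  have hclr : ∀ t, cl t ≤ r := fun t => max_le hr.le (min_le_right _ _)
  have hclL : ∀ s t, |cl s - cl t| ≤ |s - t| := fun s t => by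
    have h1 := abs_max_sub_max_le_abs (min s r) (min t r) 0
    have h2 := abs_min_sub_min_le_max s r t r
    simp only [hcl]
    rw [max_comm 0, max_comm 0]
    refine h1.trans (h2.trans ?_)
    rw [sub_self, abs_zero, max_eq_left (abs_nonneg _)]
  have hclid : ∀ t, 0 ≤ t → t ≤ r → cl t = t := fun t h1 h2 => by simp [hcl, h1, h2]
  have hbx : ∀ n t, dist (u n (cl t)) x ≤ r + 1 := fun n t => by
    have h1 := hud n (cl t) 0 (hcl0 t) le_rfl
    rw [hu0, sub_zero, abs_of_nonneg (hcl0 t)] at h1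
    linarith [hclr t, hη1 n]
  have hb : ∀ n k s t, dist (u n (cl s)) (u k (cl t)) ≤ (r + 1) + (r + 1) := fun n k s t =>
    (dist_triangle_right _ _ x).trans (add_le_add (hbx n s) (hbx k t))
  have hE : ∀ n t, φ (u n (cl t)) ≤ ((a - c * (cl t - η n) : ℝ) : EReal) := fun n t =>
    hue n _ (hcl0 t) (hclr t)
  have hE' : ∀ n t, φ (u n (cl t)) ≤ ((a + c : ℝ) : EReal) := fun n t => by
    refine (hE n t).trans ?_
    rw [EReal.coe_le_coe_iff]
    nlinarith [hcl0 t, hη1 n]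
  let e := Denumerable.eqv ℚ
  obtain ⟨d, hd, hlim⟩ := exists_diagonal (τ := σ) (fun n k => u n (cl (e.symm k : ℚ))) (by
    intro k j hj
    obtain ⟨y, i, hi, hy⟩ := hφ.cpt (fun n => u (j n) (cl (e.symm k : ℚ)))
      ⟨_, fun n => hE' _ _⟩ ⟨_, fun n m => hb _ _ _ _⟩
    exact ⟨y, i, hi, hy⟩)
  have hlim' : ∀ q : ℚ, ∃ y, Tendsto (fun n => u (d n) (cl q)) atTop (@nhds X σ y) := fun q => by
    simpa using hlim (e q)
  choose U hU using hlim'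
  have hηd : Tendsto (fun n => η (d n)) atTop (𝓝 0) := hηlim.comp hd
  have hUd : ∀ p q : ℚ, dist (U p) (U q) ≤ |(p : ℝ) - q| := fun p q => by
    refine dist_le_of_tendsto hcomp (hU p) (hU q)
      (f := fun n => |(p : ℝ) - q| + η (d n)) (by simpa using hηd.const_add |(p : ℝ) - q|)
      fun n => ?_
    exact (hud _ _ _ (hcl0 _) (hcl0 _)).trans (by linarith [hclL p q])
  have hUe : ∀ q : ℚ, φ (U q) ≤ ((a - c * cl q : ℝ) : EReal) := fun q => by
    refine hφ.le_of_tendsto (f := fun n => a - c * (cl q - η (d n))) ⟨_, fun n k => hb _ _ _ _⟩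
      (hU q) ?_ fun n => hE _ _
    simpa using ((hηd.const_sub (cl q)).const_mul c).const_sub a
  have hU0 : U 0 = x := by
    refine dist_le_zero.1 (dist_le_of_tendsto hcomp (hU 0)
      (@tendsto_const_nhds X σ ℕ x atTop) (f := fun _ => 0) tendsto_const_nhds fun n => ?_)
    rw [Rat.cast_zero, hclid 0 le_rfl hr.le, hu0, dist_self]
  obtain ⟨w, hw, hwU⟩ := exists_lipschitz_extension hUd
  refine ⟨w, hw, by rw [← hU0, ← hwU]; simp, fun t ht0 htr => ?_⟩
  obtain ⟨q, hq⟩ := exists_rat_seq t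
  have hdist : ∀ s s', dist (w s) (w s') ≤ |s - s'| := fun s s' => by
    simpa [Real.dist_eq] using hw.dist_le_mul s s'
  have hq0 : Tendsto (fun n => |(q n : ℝ) - t|) atTop (𝓝 0) := by
    simpa using (hq.sub_const t).abs
  have hwt : Tendsto (fun n => U (q n)) atTop (@nhds X σ (w t)) := by
    refine tendsto_of_dist hcomp (@tendsto_const_nhds X σ ℕ (w t) atTop) ?_
    refine squeeze_zero (fun _ => dist_nonneg) (fun n => ?_) hq0
    rw [← hwU]; exact hdist _ _
  have hbU : ∃ C : ℝ, ∀ n k, dist (U (q n)) (U (q k)) ≤ C := by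
    obtain ⟨C, hC⟩ := hq0.bddAbove_range
    refine ⟨C + C, fun n k => (dist_triangle_right _ _ (w t)).trans (add_le_add ?_ ?_)⟩ <;>
    · rw [← hwU]
      exact (hdist _ _).trans (hC ⟨_, rfl⟩)
  have hclc : Continuous cl := by fun_prop
  have hcq : Tendsto (fun n => a - c * cl (q n)) atTop (𝓝 (a - c * t)) := by
    have := (hclc.tendsto t).comp hq
    rw [hclid t ht0 htr] at this
    exact (this.const_mul c).const_sub a
  exact hφ.le_of_tendsto hbU hwt hcq fun n => hUe _

/-! ### Comparison of the relaxed slopes -/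

/-- Wherever the WED slope is below `c`, there are arbitrarily close points with no larger energy and
local slope at most `c`. -/
theorem exists_slope_le {X : Type*} [MetricSpace X] [CompleteSpace X]
    {σ : TopologicalSpace X} (hcomp : Compatible σ) {φ : X → EReal} {ustar : X} {A B : ℝ}
    (hφ : LSCC σ φ ustar A B) {x : X} (hx : φ x ≠ ⊤) {c r : ℝ} (hr : 0 < r)
    (h : wedSlope φ x < ENNReal.ofReal c) :
    ∃ y, dist y x < r ∧ φ y ≤ φ x ∧ slope φ y ≤ ENNReal.ofReal c := by
  have hc : 0 < c := ENNReal.ofReal_pos.1 (bot_le.trans_lt h)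
  have ha := (EReal.coe_toReal hx (hφ.ne_bot x)).symm
  by_contra! hcon
  obtain ⟨u, hu, hu0, hdesc⟩ := exists_descent_curve hcomp hφ ha hc hr
    fun z hz hz' => hcon z hz (by rwa [ha])
  exact h.not_ge (le_wedSlope_of_curve ha hc hr hu hu0 hdesc)

theorem relaxedWedSlope_le {X : Type*} [MetricSpace X] {σ : TopologicalSpace X} {φ : X → EReal}
    {ustar : X} {A B : ℝ} (hφ : LSCC σ φ ustar A B) (x : X) :
    relaxedWedSlope σ φ x ≤ relaxedSlope σ φ x := by
  refine iInf_mono fun u => iInf_mono fun _ => iInf_mono fun hb => ?_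
  obtain ⟨C, hC⟩ := hb
  exact liminf_le_liminf (Eventually.of_forall fun n =>
    wedSlope_le_slope hφ (ne_top_of_le_ne_top (EReal.coe_ne_top C) (hC n).2))

theorem relaxedSlope_le_liminf {X : Type*} [MetricSpace X] {σ : TopologicalSpace X} {φ : X → EReal}
    {x : X} {u : ℕ → X} (hu : Tendsto u atTop (@nhds X σ x))
    (hb : ∃ C : ℝ, ∀ n, dist (u n) x ≤ C ∧ φ (u n) ≤ (C : EReal)) :
    relaxedSlope σ φ x ≤ liminf (fun n => slope φ (u n)) atTop :=
  iInf₂_le_of_le u hu (iInf_le _ hb)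

theorem relaxedSlope_le {X : Type*} [MetricSpace X] [CompleteSpace X]
    {σ : TopologicalSpace X} (hcomp : Compatible σ) {φ : X → EReal} {ustar : X} {A B : ℝ}
    (hφ : LSCC σ φ ustar A B) (x : X) : relaxedSlope σ φ x ≤ relaxedWedSlope σ φ x := by
  refine le_iInf fun u => le_iInf fun hu => le_iInf fun ⟨C, hC⟩ => ?_
  refine le_of_forall_gt_imp_ge_of_dense fun D hD => ?_
  rcases eq_or_ne D ⊤ with rfl | hDtop
  · exact le_top
  obtain ⟨j, hj, hjD⟩ := extraction_of_frequently_atTop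
    (frequently_lt_of_liminf_lt (by isBoundedDefault) hD)
  have hy : ∀ n, ∃ y, dist y (u (j n)) < 1 / ((n : ℝ) + 1) ∧ φ y ≤ φ (u (j n)) ∧
      slope φ y ≤ D := fun n => by
    have h := hjD n
    rw [← ENNReal.ofReal_toReal hDtop] at h ⊢
    exact exists_slope_le hcomp hφ (ne_top_of_le_ne_top (EReal.coe_ne_top C) (hC _).2)
      (by positivity) h
  choose y hy1 hy2 hy3 using hy
  have hyx : Tendsto y atTop (@nhds X σ x) :=
    tendsto_of_dist hcomp (hu.comp hj.tendsto_atTop) (squeeze_zero (fun _ => dist_nonneg)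
      (fun n => (hy1 n).le) tendsto_one_div_add_atTop_nhds_zero_nat)
  have hyb : ∃ C : ℝ, ∀ n, dist (y n) x ≤ C ∧ φ (y n) ≤ (C : EReal) := by
    refine ⟨C + 1, fun n => ⟨?_, ((hy2 n).trans (hC _).2).trans ?_⟩⟩
    · have h1 := dist_triangle (y n) (u (j n)) x
      have h2 : 1 / ((n : ℝ) + 1) ≤ 1 := by rw [div_le_one (by positivity)]; simp
      linarith [hy1 n, (hC (j n)).1]
    · rw [EReal.coe_le_coe_iff]; linarith
  refine (relaxedSlope_le_liminf hyx hyb).trans ?_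
  refine (liminf_le_liminf (Eventually.of_forall hy3)).trans_eq ?_
  exact liminf_const D

/-- If the local slope is lower semicontinuous at `x` along the admissible sequences, relaxation does
not change it there; the constant sequence gives one inequality. -/
theorem relaxedSlope_eq_slope {X : Type*} [MetricSpace X] {σ : TopologicalSpace X} {φ : X → EReal}
    {x : X} (hbot : φ x ≠ ⊥) (hx : φ x ≠ ⊤)
    (h : ∀ xs : ℕ → X, Tendsto xs atTop (@nhds X σ x) →
        (∃ C : ℝ, ∀ n, dist (xs n) x ≤ C ∧ φ (xs n) ≤ (C : EReal)) →
        slope φ x ≤ Filter.liminf (fun n => slope φ (xs n)) atTop) :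
    relaxedSlope σ φ x = slope φ x := by
  refine le_antisymm ?_ (le_iInf fun u => le_iInf fun hu => le_iInf fun hb => h u hu hb)
  refine (relaxedSlope_le_liminf (@tendsto_const_nhds X σ ℕ x atTop)
    ⟨max 0 (φ x).toReal, fun n => ⟨by simp, ?_⟩⟩).trans_eq (liminf_const _)
  calc φ x = ((φ x).toReal : EReal) := (EReal.coe_toReal hx hbot).symm
    _ ≤ _ := EReal.coe_le_coe_iff.2 (le_max_right _ _)

/-- Corollary 5.5: under the LSCC assumptions, the relaxed WED slope
coincides with the relaxed slope: `|∂_w^- φ|(ū) = |∂⁻φ|(ū)` for every `ū ∈ D(φ)`; in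
particular, if the local slope is σ-sequentially lower semicontinuous along `d`-bounded
sequences with bounded energy, then `|∂_w^- φ|(ū) = |∂φ|(ū)` for all `ū ∈ D(φ)`. -/
theorem statement17
    {X : Type*} [MetricSpace X] [CompleteSpace X]
    (σ : TopologicalSpace X) (hcomp : Compatible σ)
    (φ : X → EReal) (ustar : X) (A B : ℝ) (hφ : LSCC σ φ ustar A B) :
    (∀ ubar : X, φ ubar ≠ ⊤ → relaxedWedSlope σ φ ubar = relaxedSlope σ φ ubar) ∧
    ((∀ (x : X) (xs : ℕ → X), Tendsto xs atTop (@nhds X σ x) →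
        (∃ C : ℝ, ∀ n, dist (xs n) x ≤ C ∧ φ (xs n) ≤ (C : EReal)) →
        slope φ x ≤ Filter.liminf (fun n => slope φ (xs n)) atTop) →
      ∀ ubar : X, φ ubar ≠ ⊤ → relaxedWedSlope σ φ ubar = slope φ ubar) := by
  have key : ∀ x, relaxedWedSlope σ φ x = relaxedSlope σ φ x := fun x =>
    le_antisymm (relaxedWedSlope_le hφ x) (relaxedSlope_le hcomp hφ x)
  refine ⟨fun x _ => key x, fun h x hx => ?_⟩
  rw [key, relaxedSlope_eq_slope (hφ.ne_bot x) hx (h x)]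

end WED
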